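/- arXiv:2406.16599 — 2 statements merged into one kernel-verified Lean document; each statement's English description precedes it below -/
import Mathlib

section
/- Let K be a field, A = K[x_1, ..., x_n], p ∈ K[x_1] an irreducible polynomial, Ā = (K[x_1]/⟨p⟩)[x_2, ..., x_n], and π : A → Ā the natural ring homomorphism; for a matrix F over A write F̄ for the entrywise image under π. Let F ∈ A^{2×2}. If rank(F̄) = 1 and the 1 × 1 reduced minors of F̄ generate the unit ideal of Ā (i.e. J_1(F̄) = Ā), then there exists U ∈ GL_2(A) such that U·F = diag(1, p)·G for some G ∈ A^{2×2}. -/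
/-- The set of all `i × i` minors of a matrix. -/
def minorsSet {R : Type*} [CommRing R] {l m : ℕ} (i : ℕ)
    (F : Matrix (Fin l) (Fin m) R) : Set R :=
  {a | ∃ (f : Fin i → Fin l) (g : Fin i → Fin m),
      StrictMono f ∧ StrictMono g ∧ a = (F.submatrix f g).det}

/-- `d` is a greatest common divisor of the set `s`. -/
def IsGcdOf {R : Type*} [CommRing R] (d : R) (s : Set R) : Prop :=
  (∀ a ∈ s, d ∣ a) ∧ ∀ c : R, (∀ a ∈ s, c ∣ a) → c ∣ d

/-- The image of a univariate polynomial `p ∈ K[x₁]` in `A = K[x₁, …, x_{n+1}]`,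
sending the variable to `x₁` (the variable of index `0`). -/
noncomputable def polyImage {K : Type*} [CommRing K] (n : ℕ) (p : Polynomial K) :
    MvPolynomial (Fin (n + 1)) K :=
  Polynomial.aeval (MvPolynomial.X 0) p

/-- The natural ring homomorphism
`π : A = K[x₁, …, x_{n+1}] → Ā = (K[x₁]/⟨p⟩)[x₂, …, x_{n+1}]`,
sending `x₁` to the residue class of `x₁` and the other variables to themselves. -/
noncomputable def piBar {K : Type*} [Field K] (n : ℕ) (p : Polynomial K) :
    MvPolynomial (Fin (n + 1)) K →+*
      MvPolynomial (Fin n) (Polynomial K ⧸ Ideal.span {p}) :=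
  (MvPolynomial.aeval (fun i : Fin (n + 1) =>
    Fin.cases (MvPolynomial.C (Ideal.Quotient.mk (Ideal.span {p}) Polynomial.X))
      (fun j => MvPolynomial.X j) i)).toRingHom

section

open Polynomial

/-- Every `2 × 2` matrix over `R` whose determinant is `1` modulo `p` is congruent modulo `p` to a
matrix of determinant `1`. -/
def LiftsSL2 (R : Type*) [CommRing R] (p : R) : Prop :=
  ∀ M : Matrix (Fin 2) (Fin 2) R, p ∣ M.det - 1 →
    ∃ U : Matrix (Fin 2) (Fin 2) R, U.det = 1 ∧ ∀ i j, p ∣ U i j - M i j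

theorem exists_bounded_solution {B : Type*} [CommRing B] [Nontrivial B] (p : B)
    (Q P M : Matrix (Fin 2) (Fin 2) B[X]) (f : B[X]) (hf : f.Monic)
    (hQP : Q * P = Matrix.scalar (Fin 2) (f ^ 2))
    (hQM : ∀ i j, C p ∣ (Q * M - Matrix.scalar (Fin 2) f) i j) :
    ∃ s : B, p ∣ s - 1 ∧ ∀ h : Fin 2 → B[X], ∃ a : Fin 2 → B[X],
      ∀ i, (C s * h i - (Q.mulVec a) i).degree ≤ f.natDegree := by
  classical
  let T : Submodule B (Fin 2 → B[X]) :=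
    LinearMap.range ((Matrix.mulVecLin Q).restrictScalars B) ⊔
      Submodule.pi Set.univ (fun _ => degreeLE B f.natDegree)
  have hTrange : ∀ a : Fin 2 → B[X], Q.mulVec a ∈ T := fun a =>
    Submodule.mem_sup_left ⟨a, rfl⟩
  have hTdeg : ∀ a : Fin 2 → B[X], (∀ i, (a i).degree ≤ f.natDegree) → a ∈ T := fun a ha =>
    Submodule.mem_sup_right (by
      rw [Submodule.mem_pi]
      intro i _
      exact mem_degreeLE.2 (ha i))
  have hf2 : (f ^ 2).Monic := hf.pow 2
  -- the quotient is finitely generated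
  have hfin : Module.Finite B ((Fin 2 → B[X]) ⧸ T) := by
    let k := (f ^ 2).natDegree
    have : Module.Finite B (degreeLT B k) := Module.Finite.equiv (degreeLTEquiv B k).symm
    let Φ : (Fin 2 → degreeLT B k) →ₗ[B] (Fin 2 → B[X]) :=
      LinearMap.pi fun i => (degreeLT B k).subtype ∘ₗ LinearMap.proj i
    refine Module.Finite.of_surjective (T.mkQ ∘ₗ Φ) fun z => ?_
    obtain ⟨h, rfl⟩ := T.mkQ_surjective z
    refine ⟨fun i => ⟨h i %ₘ (f ^ 2), ?_⟩, ?_⟩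
    · rw [mem_degreeLT]
      exact (degree_modByMonic_lt _ hf2).trans_le degree_le_natDegree
    · rw [LinearMap.comp_apply, ← sub_eq_zero, ← map_sub, Submodule.mkQ_apply,
        Submodule.Quotient.mk_eq_zero]
      have : (Φ (fun i => ⟨h i %ₘ (f ^ 2), by
          rw [mem_degreeLT]
          exact (degree_modByMonic_lt _ hf2).trans_le degree_le_natDegree⟩) - h) =
          Q.mulVec (P.mulVec fun i => - (h i /ₘ (f ^ 2))) := by
        rw [Matrix.mulVec_mulVec, hQP]
        ext1 i
        have := modByMonic_add_div (h i) (f ^ 2)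
        simp only [Pi.sub_apply, Matrix.scalar_apply, Matrix.mulVec_diagonal]
        change h i %ₘ (f ^ 2) - h i = _
        linear_combination this
      rw [this]
      exact hTrange _
  -- multiplication by `p` is surjective on it
  have hsur : (⊤ : Submodule B ((Fin 2 → B[X]) ⧸ T)) ≤ Ideal.span {p} • ⊤ := by
    intro z _
    obtain ⟨h, rfl⟩ := T.mkQ_surjective z
    choose E hE using hQM
    have key : h = Q.mulVec (M.mulVec fun i => h i /ₘ f) + (fun i => h i %ₘ f) +
        p • (fun i => - ((Matrix.of E).mulVec fun i => h i /ₘ f) i) := by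
      have hQM' : Q * M = Matrix.scalar (Fin 2) f + C p • Matrix.of E := by
        ext1 i j
        have := hE i j
        simp only [Matrix.sub_apply] at this
        simp only [Matrix.add_apply, Matrix.smul_apply, Matrix.of_apply, smul_eq_mul]
        linear_combination this
      rw [Matrix.mulVec_mulVec, hQM', Matrix.add_mulVec, Matrix.smul_mulVec]
      ext1 i
      have := modByMonic_add_div (h i) f
      simp only [Pi.add_apply, Pi.smul_apply, Matrix.scalar_apply, Matrix.mulVec_diagonal,
        smul_eq_mul, smul_eq_C_mul]
      linear_combination -this
    have hmem : T.mkQ (Q.mulVec (M.mulVec fun i => h i /ₘ f) + fun i => h i %ₘ f) = 0 :=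
      (Submodule.Quotient.mk_eq_zero T).2 (T.add_mem (hTrange _) (hTdeg _ fun i =>
        (degree_modByMonic_lt _ hf).le.trans degree_le_natDegree))
    rw [key, map_add, map_smul, hmem, zero_add]
    exact Submodule.smul_mem_smul (Ideal.mem_span_singleton_self p) trivial
  obtain ⟨s, hs, hs'⟩ := Submodule.exists_sub_one_mem_and_smul_eq_zero_of_fg_of_le_smul _ _
    hfin.fg_top hsur
  refine ⟨s, Ideal.mem_span_singleton.1 hs, fun h => ?_⟩
  have h1 := hs' (T.mkQ h) trivial
  rw [← map_smul, Submodule.mkQ_apply, Submodule.Quotient.mk_eq_zero] at h1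
  obtain ⟨_, ⟨a, rfl⟩, σ, hσ, h2⟩ := Submodule.mem_sup.1 h1
  refine ⟨a, fun i => ?_⟩
  have h3 := congrFun h2 i
  rw [Submodule.mem_pi] at hσ
  have h4 := mem_degreeLE.1 (hσ i trivial)
  convert h4 using 2
  simp only [Pi.add_apply, Pi.smul_apply, smul_eq_C_mul] at h3
  rw [← h3]
  simp

theorem dvd_sub_iff_mk_eq {R : Type*} [CommRing R] {p a b : R} :
    p ∣ a - b ↔ Ideal.Quotient.mk (Ideal.span {p}) a = Ideal.Quotient.mk (Ideal.span {p}) b := by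
  rw [Ideal.Quotient.eq, Ideal.mem_span_singleton]

theorem forall_dvd_sub_iff_mapMatrix_eq {R : Type*} [CommRing R] {p : R}
    {M N : Matrix (Fin 2) (Fin 2) R} :
    (∀ i j, p ∣ M i j - N i j) ↔
      (Ideal.Quotient.mk (Ideal.span {p})).mapMatrix M =
        (Ideal.Quotient.mk (Ideal.span {p})).mapMatrix N := by
  simp only [dvd_sub_iff_mk_eq, ← Matrix.ext_iff, RingHom.mapMatrix_apply, Matrix.map_apply]

theorem exists_congr_det_eq_C {B : Type*} [CommRing B] [IsDomain B] (p : B)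
    (M P : Matrix (Fin 2) (Fin 2) B[X]) (f : B[X]) (hf : f.Monic)
    (hM : C p ∣ M.det - 1) (hP : P.det = f ^ 2) (hPM : ∀ i j, C p ∣ P i j - f * M i j) :
    ∃ (V : Matrix (Fin 2) (Fin 2) B[X]) (r : B), V.det = C r ∧ p ∣ r - 1 ∧
      ∀ i j, C p ∣ V i j - M i j := by
  set q := Ideal.Quotient.mk (Ideal.span {C p}) with hq
  have hqp : q (C p) = 0 := Ideal.Quotient.eq_zero_iff_mem.2 (Ideal.mem_span_singleton_self _)
  have hMq : (q.mapMatrix M).det = 1 := by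
    rw [← RingHom.map_det, ← map_one q]
    exact dvd_sub_iff_mk_eq.1 hM
  have hPq : q.mapMatrix P = q.mapMatrix (f • M) := forall_dvd_sub_iff_mapMatrix_eq.1 hPM
  have hQP : P.adjugate * P = Matrix.scalar (Fin 2) (f ^ 2) := by
    rw [Matrix.adjugate_mul, hP, Matrix.scalar_apply, Matrix.smul_one_eq_diagonal]
  have hQM : ∀ i j, C p ∣ (P.adjugate * M) i j - (Matrix.scalar (Fin 2) f) i j := by
    rw [forall_dvd_sub_iff_mapMatrix_eq, map_mul, RingHom.map_adjugate, ← hq, hPq,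
      ← RingHom.map_adjugate, Matrix.adjugate_smul, ← map_mul, Matrix.smul_mul,
      Matrix.adjugate_mul]
    have h1 := dvd_sub_iff_mk_eq.1 hM
    rw [← hq, map_one] at h1
    ext i j
    simp only [Fintype.card_fin, RingHom.mapMatrix_apply, Matrix.map_apply, Matrix.smul_apply,
      smul_eq_mul, map_mul, map_pow, h1, Matrix.scalar_apply, Matrix.diagonal_apply,
      Matrix.one_apply]
    split <;> simp
  obtain ⟨s, hs, hsol⟩ := exists_bounded_solution p P.adjugate P M f hf hQP hQM
  choose H hH using hQM
  choose a ha using fun j => hsol (fun i => H i j)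
  have hsq : q (C s) = 1 := by
    rw [← map_one q, hq, ← dvd_sub_iff_mk_eq, ← C_1, ← C_sub]
    exact (map_dvd C hs)
  let V : Matrix (Fin 2) (Fin 2) B[X] := C s • M - C p • (Matrix.of a).transpose
  have hVM : q.mapMatrix V = q.mapMatrix M := by
    ext i j
    simp [V, hsq, hqp]
  have hdeg : ∀ i j, ((P.adjugate * V) i j).natDegree ≤ f.natDegree := by
    intro i j
    have : (P.adjugate * V) i j = C s * (Matrix.scalar (Fin 2) f) i j +
        C p * (C s * H i j - (P.adjugate.mulVec (a j)) i) := by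
      have h2 : (P.adjugate * (Matrix.of a).transpose) i j = (P.adjugate.mulVec (a j)) i := rfl
      simp only [V, Matrix.mul_sub, Matrix.mul_smul, Matrix.sub_apply, Matrix.smul_apply, h2,
        smul_eq_mul]
      linear_combination C s * hH i j
    rw [this]
    refine natDegree_add_le_of_degree_le (natDegree_C_mul_le _ _ |>.trans ?_)
      (natDegree_C_mul_le _ _ |>.trans (natDegree_le_of_degree_le (ha j i)))
    rw [Matrix.scalar_apply, Matrix.diagonal_apply]
    split <;> simp
  have hdet : f ^ 2 * V.det = (P.adjugate * V).det := by
    rw [Matrix.det_mul, Matrix.det_adjugate, hP]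
    simp
  have hdetdeg : V.det.natDegree = 0 := by
    have h1 : (f ^ 2 * V.det).natDegree ≤ f.natDegree + f.natDegree := by
      rw [hdet, Matrix.det_fin_two]
      exact (natDegree_sub_le_of_le (natDegree_mul_le_of_le (hdeg _ _) (hdeg _ _))
        (natDegree_mul_le_of_le (hdeg _ _) (hdeg _ _))).trans (by simp)
    by_cases h0 : V.det = 0
    · simp [h0]
    · rw [natDegree_mul (hf.pow 2).ne_zero h0, natDegree_pow] at h1
      omega
  obtain ⟨r, hr⟩ := natDegree_eq_zero.1 hdetdeg
  refine ⟨V, r, hr.symm, ?_, forall_dvd_sub_iff_mapMatrix_eq.2 hVM⟩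
  have : C p ∣ C (r - 1) := by
    rw [C_sub, C_1, hr, dvd_sub_iff_mk_eq, ← hq, RingHom.map_det, hVM, hMq, map_one]
  rw [C_dvd_iff_dvd_coeff] at this
  simpa using this 0

theorem exists_SL2_of_det_eq_C {B : Type*} [CommRing B] [IsDomain B] {p : B} (hp : ¬ IsUnit p)
    (hB : LiftsSL2 B p) (M V : Matrix (Fin 2) (Fin 2) B[X]) (r : B)
    (hM : C p ∣ M.det - 1) (hr : V.det = C r) (hpr : p ∣ r - 1)
    (hVM : ∀ i j, C p ∣ V i j - M i j) :
    ∃ U : Matrix (Fin 2) (Fin 2) B[X], U.det = 1 ∧ ∀ i j, C p ∣ U i j - M i j := by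
  set q := Ideal.Quotient.mk (Ideal.span {C p}) with hq
  have hMq : (q.mapMatrix M).det = 1 := by
    rw [← RingHom.map_det, ← map_one q]
    exact dvd_sub_iff_mk_eq.1 hM
  have hVMq : q.mapMatrix V = q.mapMatrix M := forall_dvd_sub_iff_mapMatrix_eq.1 hVM
  have hrq : q (C r) = 1 := by
    rw [← map_one q, hq, ← dvd_sub_iff_mk_eq, ← C_1, ← C_sub]
    exact map_dvd C hpr
  have hr0 : r ≠ 0 := by
    rintro rfl
    rw [zero_sub, dvd_neg] at hpr
    exact hp (isUnit_of_dvd_one hpr)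
  let ev : B[X] →+* B := evalRingHom 0
  have hevdvd : ∀ g : B[X], C p ∣ g → p ∣ ev g := fun g hg => by
    simpa [ev] using map_dvd ev hg
  obtain ⟨N, hN, hNM⟩ := hB (ev.mapMatrix M) (by
    rw [← RingHom.map_det, ← map_one ev, ← map_sub]
    exact hevdvd _ hM)
  -- the constant parts, as matrices over `B[X]`
  have hNq : q.mapMatrix (C.mapMatrix N) = q.mapMatrix (C.mapMatrix (ev.mapMatrix M)) :=
    forall_dvd_sub_iff_mapMatrix_eq.1 fun i j => by
      simpa using map_dvd C (hNM i j)
  have hV0q : q.mapMatrix (C.mapMatrix (ev.mapMatrix V)) =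
      q.mapMatrix (C.mapMatrix (ev.mapMatrix M)) :=
    forall_dvd_sub_iff_mapMatrix_eq.1 fun i j => by
      simpa using map_dvd C (hevdvd _ (hVM i j))
  let V₀ : Matrix (Fin 2) (Fin 2) B[X] := C.mapMatrix (ev.mapMatrix V)
  have hV₀det : V₀.det = C r := by
    rw [← RingHom.map_det, ← RingHom.map_det, hr]
    simp [ev]
  let sc : B[X] →+* B[X] := compRingHom (C r * X)
  have hdiv : ∀ i j, C r ∣ (sc.mapMatrix V - V₀) i j := fun i j => by
    have h1 := sub_dvd_eval_sub (C r * X) 0 ((V i j).map C)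
    rw [sub_zero, eval_map, eval_map] at h1
    refine (dvd_mul_right _ _).trans (h1.trans (dvd_of_eq ?_))
    simp only [sc, V₀, ev, Matrix.sub_apply, RingHom.mapMatrix_apply, Matrix.map_apply,
      coe_compRingHom_apply, coe_evalRingHom]
    rw [comp, ← eval_map C 0, eval_map, ← C_0, eval₂_at_apply]
  choose Z hZ using hdiv
  have hscV : sc.mapMatrix V = V₀ + C r • Matrix.of Z := by
    ext1 i j
    have := hZ i j
    simp only [Matrix.sub_apply] at this
    simp only [Matrix.add_apply, Matrix.smul_apply, Matrix.of_apply, smul_eq_mul]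
    linear_combination this
  let U₀ : Matrix (Fin 2) (Fin 2) B[X] := 1 + Matrix.of Z * V₀.adjugate
  have hU₀ : sc.mapMatrix V * V₀.adjugate = C r • U₀ := by
    rw [hscV, add_mul, Matrix.mul_adjugate, hV₀det, smul_add, Matrix.smul_mul]
  have hU₀det : U₀.det = 1 := by
    have h1 := congrArg Matrix.det hU₀
    rw [Matrix.det_mul, Matrix.det_adjugate, Matrix.det_smul, hV₀det, ← RingHom.map_det, hr] at h1
    have h2 : sc (C r) = C r := by simp [sc]
    rw [h2] at h1
    simp only [Fintype.card_fin] at h1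
    have h3 : C r ^ 2 ≠ 0 := pow_ne_zero _ (C_ne_zero.2 hr0)
    apply mul_left_cancel₀ h3
    rw [← h1]
    ring
  have hscq : q.mapMatrix (sc.mapMatrix V) = q.mapMatrix V :=
    forall_dvd_sub_iff_mapMatrix_eq.1 fun i j => by
      have h1 := sub_dvd_eval_sub (C r * X) X ((V i j).map C)
      rw [eval_map, eval_map] at h1
      have h2 : C p ∣ C r * X - X := by
        have : C r * X - X = C (r - 1) * X := by simp [sub_mul]
        rw [this]
        exact (map_dvd C hpr).mul_right _
      have h3 := h2.trans h1
      rwa [eval₂_C_X] at h3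
  have hU₀q : q.mapMatrix U₀ = q.mapMatrix (C r • U₀) := by
    ext i j
    simp [hrq]
  refine ⟨U₀ * C.mapMatrix N, ?_, forall_dvd_sub_iff_mapMatrix_eq.2 ?_⟩
  · rw [Matrix.det_mul, hU₀det, ← RingHom.map_det, hN, map_one, one_mul]
  · have hM0 : q (C (ev M.det)) = 1 := by
      rw [← map_one q, ← map_one C, ← map_one ev, hq, ← dvd_sub_iff_mk_eq, ← map_sub, ← map_sub]
      exact map_dvd C (hevdvd _ hM)
    rw [← hq, map_mul, hU₀q, ← hU₀, map_mul, hscq, hVMq, RingHom.map_adjugate, hV0q, hNq,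
      mul_assoc, Matrix.adjugate_mul, ← RingHom.map_det, ← RingHom.map_det, ← RingHom.map_det,
      hM0, one_smul, mul_one]

theorem liftsSL2_of_isMaximal {R : Type*} [CommRing R] (p : R)
    (hp : (Ideal.span {p}).IsMaximal) : LiftsSL2 R p := by
  intro M hM
  set q := Ideal.Quotient.mk (Ideal.span {p})
  have inv : ∀ c : R, ¬ p ∣ c → ∃ c', p ∣ c * c' - 1 := by
    intro c hc
    have h1 : q c ≠ 0 := fun h =>
      hc (Ideal.mem_span_singleton.1 (Ideal.Quotient.eq_zero_iff_mem.1 h))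
    obtain ⟨y, hy⟩ := Ideal.Quotient.exists_inv (I := Ideal.span {p}) h1
    obtain ⟨c', rfl⟩ := Ideal.Quotient.mk_surjective y
    exact ⟨c', dvd_sub_iff_mk_eq.2 (by rw [map_mul, hy, map_one])⟩
  rw [Matrix.det_fin_two] at hM
  obtain ⟨m, hm⟩ := hM
  have main : ∀ a b c d : R, p ∣ a * d - b * c - 1 → ¬ p ∣ c →
      ∃ U : Matrix (Fin 2) (Fin 2) R, U.det = 1 ∧ p ∣ U 0 0 - a ∧ p ∣ U 0 1 - b ∧
        p ∣ U 1 0 - c ∧ p ∣ U 1 1 - d := by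
    rintro a b c d ⟨m, hm⟩ hc
    obtain ⟨c', k, hk⟩ := inv c hc
    refine ⟨!![1, (a - 1) * c'; 0, 1] * !![1, 0; c, 1] * !![1, (d - 1) * c'; 0, 1], ?_, ?_⟩
    · simp only [Matrix.det_mul, Matrix.det_fin_two_of]
      ring
    · simp only [Matrix.mul_fin_two, Matrix.of_apply, Matrix.cons_val', Matrix.cons_val_zero,
        Matrix.cons_val_one, Matrix.cons_val_fin_one]
      refine ⟨⟨(a - 1) * k, ?_⟩, ⟨c' * m + k * (c' * (a - 1) * (d - 1) + b), ?_⟩, ⟨0, ?_⟩,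
        ⟨(d - 1) * k, ?_⟩⟩
      · linear_combination (a - 1) * hk
      · linear_combination c' * hm + (c' * (a - 1) * (d - 1) + b) * hk
      · ring
      · linear_combination (d - 1) * hk
  by_cases hc : p ∣ M 1 0
  · have ha : ¬ p ∣ M 0 0 := fun h => by
      have : p ∣ 1 := by
        have h1 : (1 : R) = M 0 0 * M 1 1 - M 0 1 * M 1 0 - p * m := by linear_combination -hm
        rw [h1]
        exact dvd_sub (dvd_sub (h.mul_right _) (hc.mul_left _)) (dvd_mul_right _ _)
      exact hp.ne_top (Ideal.span_singleton_eq_top.2 (isUnit_of_dvd_one this))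
    obtain ⟨U, hU, h00, h01, h10, h11⟩ := main (M 0 0) (M 0 1) (M 1 0 + M 0 0) (M 1 1 + M 0 1)
      ⟨m, by linear_combination hm⟩ (fun h => ha ((dvd_add_right hc).1 h))
    refine ⟨!![U 0 0, U 0 1; U 1 0 - U 0 0, U 1 1 - U 0 1], ?_, ?_⟩
    · rw [Matrix.det_fin_two] at hU
      rw [Matrix.det_fin_two_of]
      linear_combination hU
    · simp only [Fin.forall_fin_two, Matrix.of_apply, Matrix.cons_val', Matrix.cons_val_zero,
        Matrix.cons_val_one, Matrix.cons_val_fin_one]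
      refine ⟨⟨h00, h01⟩, ?_, ?_⟩
      · convert dvd_sub h10 h00 using 1
        ring
      · convert dvd_sub h11 h01 using 1
        ring
  · obtain ⟨U, hU, h00, h01, h10, h11⟩ := main _ _ _ _ ⟨m, hm⟩ hc
    exact ⟨U, hU, by simp only [Fin.forall_fin_two]; exact ⟨⟨h00, h01⟩, h10, h11⟩⟩

theorem LiftsSL2.of_ringEquiv {R S : Type*} [CommRing R] [CommRing S] (e : R ≃+* S) {p : R}
    (h : LiftsSL2 R p) : LiftsSL2 S (e p) := by
  intro M hM
  have hp : ∀ x : S, e p ∣ x ↔ p ∣ e.symm x := fun x => by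
    rw [← map_dvd_iff e, e.apply_symm_apply]
  obtain ⟨U, hU, hUM⟩ := h (e.symm.toRingHom.mapMatrix M) (by
    rw [hp] at hM
    rw [← RingHom.map_det]
    simpa using hM)
  refine ⟨e.toRingHom.mapMatrix U, ?_, fun i j => ?_⟩
  · rw [← RingHom.map_det, hU, map_one]
  · rw [hp]
    simpa using hUM i j

theorem irreducible_map_fractionRing {K : Type*} [Field K] (F : Type*) [Field F]
    [Algebra K[X] F] [IsFractionRing K[X] F] {p : K[X]} (hp : Irreducible p) :
    Irreducible ((p.map C).map (algebraMap K[X] F)) := by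
  have h1 : Prime (p.map (C : K →+* K[X])) := by
    rw [← Bivariate.swap_C]
    exact (MulEquiv.prime_iff (Bivariate.swap (R := K))).2 (prime_C_iff.2 hp.prime)
  have h2 : (p.map (C : K →+* K[X])).natDegree ≠ 0 := by
    rw [natDegree_map_eq_of_injective C_injective]
    exact hp.natDegree_pos.ne'
  exact ((h1.irreducible.isPrimitive h2).irreducible_iff_irreducible_map_fraction_map).1
    h1.irreducible

/-- Make the last variable of `K[t][x₁, …, xₙ][y]` the first one. -/
noncomputable def innermostVarEquiv (K : Type*) [Field K] (σ : Type*) :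
    (MvPolynomial σ K[X])[X] ≃+* MvPolynomial σ K[X][X] :=
  (MvPolynomial.optionEquivLeft K[X] σ).symm.toRingEquiv.trans
    ((MvPolynomial.optionEquivRight K[X] σ).toRingEquiv.trans
      (MvPolynomial.mapEquiv σ (Bivariate.swap (R := K)).toRingEquiv))

theorem innermostVarEquiv_C_C {K : Type*} [Field K] (σ : Type*) (p : K[X]) :
    innermostVarEquiv K σ (C (MvPolynomial.C p)) = MvPolynomial.C (p.map C) := by
  simp [innermostVarEquiv, Bivariate.swap_C]

theorem innermostVarEquiv_map {K : Type*} [Field K] (σ : Type*) (f : K[X]) :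
    innermostVarEquiv K σ (f.map (MvPolynomial.C.comp C)) = MvPolynomial.C (C f) := by
  have : (innermostVarEquiv K σ).toRingHom.comp
      (mapRingHom ((MvPolynomial.C (σ := σ)).comp (C (R := K)))) = MvPolynomial.C.comp C := by
    ext x
    · simp [innermostVarEquiv_C_C]
    · simp [innermostVarEquiv, Bivariate.swap_Y]
  exact congrArg (fun g => g f) this

theorem LiftsSL2.exists_det_eq_sq {R S : Type*} [CommRing R] [CommRing S] {φ : R →+* S}
    (hφ : Function.Injective φ) {p : R} (hS : LiftsSL2 S (φ p)) {D : Set R}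
    (hD : ∀ Y : Matrix (Fin 2) (Fin 2) S, ∃ f ∈ D, ∃ Z : Matrix (Fin 2) (Fin 2) R,
      ∀ i j, φ (Z i j) = φ f * Y i j)
    (M : Matrix (Fin 2) (Fin 2) R) (hM : p ∣ M.det - 1) :
    ∃ f ∈ D, ∃ P : Matrix (Fin 2) (Fin 2) R, P.det = f ^ 2 ∧ ∀ i j, p ∣ P i j - f * M i j := by
  obtain ⟨U, hU, hUM⟩ := hS (φ.mapMatrix M) (by
    rw [← RingHom.map_det, ← map_one φ, ← map_sub]
    exact map_dvd φ hM)
  choose Y hY using hUM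
  obtain ⟨f, hf, Z, hZ⟩ := hD (Matrix.of Y)
  have hφP : φ.mapMatrix (f • M + p • Z) = φ f • U := by
    ext1 i j
    have h1 := hZ i j
    have h2 := hY i j
    simp only [RingHom.mapMatrix_apply, Matrix.map_apply, Matrix.of_apply] at h1 h2
    simp only [RingHom.mapMatrix_apply, Matrix.map_apply, Matrix.add_apply, Matrix.smul_apply,
      smul_eq_mul, map_add, map_mul, h1]
    linear_combination -φ f * h2
  refine ⟨f, hf, f • M + p • Z, hφ ?_, fun i j => ⟨Z i j, ?_⟩⟩
  · rw [RingHom.map_det, hφP, Matrix.det_smul, hU, Fintype.card_fin, mul_one, map_pow]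
  · simp

theorem exists_common_denominator {K : Type*} [Field K] {F : Type*} [Field F] [Algebra K[X] F]
    [IsFractionRing K[X] F] (σ : Type*) (Y : Matrix (Fin 2) (Fin 2) (MvPolynomial σ F[X])) :
    ∃ (g : K[X]) (Z : Matrix (Fin 2) (Fin 2) (MvPolynomial σ K[X][X])), g.Monic ∧ ∀ i j,
      MvPolynomial.map (mapRingHom (algebraMap K[X] F)) (Z i j) =
        MvPolynomial.map (mapRingHom (algebraMap K[X] F)) (MvPolynomial.C (C g)) * Y i j := by
  let := Polynomial.algebra K[X] F
  let := MvPolynomial.algebraMvPolynomial (R := K[X][X]) (S := F[X]) (σ := σ)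
  let S := (nonZeroDivisors K[X]).map (C : K[X] →+* K[X][X])
  let T := S.map (MvPolynomial.C : K[X][X] →+* MvPolynomial σ K[X][X])
  have : IsLocalization S F[X] := Polynomial.isLocalization _ _
  have : IsLocalization T (MvPolynomial σ F[X]) := MvPolynomial.isLocalization _ _
  obtain ⟨⟨_, _, ⟨g, hg, rfl⟩, rfl⟩, hb⟩ := IsLocalization.exist_integer_multiples T
    Finset.univ (fun ij : Fin 2 × Fin 2 => Y ij.1 ij.2)
  choose Z hZ using fun i j => hb (i, j) (Finset.mem_univ _)
  refine ⟨g * C g.leadingCoeff⁻¹,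
    fun i j => MvPolynomial.C (C (C g.leadingCoeff⁻¹)) * Z i j,
    monic_mul_leadingCoeff_inv (nonZeroDivisors.ne_zero hg), fun i j => ?_⟩
  have h2 : MvPolynomial.map (mapRingHom (algebraMap K[X] F)) (Z i j) =
      MvPolynomial.map (mapRingHom (algebraMap K[X] F)) (MvPolynomial.C (C g)) * Y i j :=
    (hZ i j).trans (Algebra.smul_def _ _)
  simp only [map_mul, h2]
  ring

theorem exists_ringHom_monic_denominators {K : Type*} [Field K] (F : Type*) [Field F]
    [Algebra K[X] F] [IsFractionRing K[X] F] (σ : Type*) (p : K[X]) :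
    ∃ φ : (MvPolynomial σ K[X])[X] →+* MvPolynomial σ F[X], Function.Injective φ ∧
      φ (C (MvPolynomial.C p)) = MvPolynomial.C ((p.map C).map (algebraMap K[X] F)) ∧
      ∀ Y : Matrix (Fin 2) (Fin 2) (MvPolynomial σ F[X]), ∃ f ∈ {f | f.Monic},
        ∃ Z : Matrix (Fin 2) (Fin 2) (MvPolynomial σ K[X])[X],
          ∀ i j, φ (Z i j) = φ f * Y i j := by
  let ψ : MvPolynomial σ K[X][X] →+* MvPolynomial σ F[X] :=
    MvPolynomial.map (mapRingHom (algebraMap K[X] F))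
  have hψ : Function.Injective ψ := MvPolynomial.map_injective _
    (map_injective _ (IsFractionRing.injective _ _))
  refine ⟨ψ.comp (innermostVarEquiv K σ).toRingHom, hψ.comp (innermostVarEquiv K σ).injective,
    ?_, fun Y => ?_⟩
  · simp only [ψ, RingHom.comp_apply, RingEquiv.toRingHom_eq_coe, RingHom.coe_coe,
      innermostVarEquiv_C_C, MvPolynomial.map_C, coe_mapRingHom]
  · obtain ⟨g, Z, hg, hZ⟩ := exists_common_denominator (K := K) σ Y
    refine ⟨g.map (MvPolynomial.C.comp C), hg.map _,
      fun i j => (innermostVarEquiv K σ).symm (Z i j), fun i j => ?_⟩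
    simp only [RingHom.comp_apply, RingEquiv.toRingHom_eq_coe, RingHom.coe_coe,
      innermostVarEquiv_map, RingEquiv.apply_symm_apply]
    exact hZ i j

theorem LiftsSL2.polynomial {B S : Type*} [CommRing B] [IsDomain B] [CommRing S] {p : B}
    (hp : ¬ IsUnit p) (hB : LiftsSL2 B p) {q : S} (hS : LiftsSL2 S q) {φ : B[X] →+* S}
    (hφ : Function.Injective φ) (hφp : φ (C p) = q)
    (hden : ∀ Y : Matrix (Fin 2) (Fin 2) S, ∃ f ∈ {f : B[X] | f.Monic},
      ∃ Z : Matrix (Fin 2) (Fin 2) B[X], ∀ i j, φ (Z i j) = φ f * Y i j) :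
    LiftsSL2 B[X] (C p) := by
  intro M hM
  rw [← hφp] at hS
  obtain ⟨f, hf, P, hP, hPM⟩ := hS.exists_det_eq_sq hφ hden M hM
  obtain ⟨V, r, hr, hpr, hVM⟩ := exists_congr_det_eq_C p M P f hf hM hP hPM
  exact exists_SL2_of_det_eq_C hp hB M V r hM hr hpr hVM

theorem liftsSL2_polynomial_mvPolynomial {K : Type*} [Field K] {F : Type*} [Field F]
    [Algebra K[X] F] [IsFractionRing K[X] F] (n : ℕ) {p : K[X]} (hp : Irreducible p)
    (hK : LiftsSL2 (MvPolynomial (Fin n) K[X]) (MvPolynomial.C p))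
    (hF : LiftsSL2 (MvPolynomial (Fin n) F[X])
      (MvPolynomial.C ((p.map C).map (algebraMap K[X] F)))) :
    LiftsSL2 (MvPolynomial (Fin n) K[X])[X] (C (MvPolynomial.C p)) := by
  obtain ⟨φ, hφ, hφp, hden⟩ := exists_ringHom_monic_denominators F (Fin n) p
  refine LiftsSL2.polynomial (fun h => hp.not_isUnit ?_) hK hF hφ hφp hden
  simpa using h.map (MvPolynomial.constantCoeff (R := K[X]) (σ := Fin n))

universe u

theorem liftsSL2_mvPolynomial (n : ℕ) : ∀ {K : Type u} [Field K] {p : K[X]}, Irreducible p →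
    LiftsSL2 (MvPolynomial (Fin n) K[X]) (MvPolynomial.C p) := by
  induction n with
  | zero =>
    intro K _ p hp
    have h := (liftsSL2_of_isMaximal p
      (PrincipalIdealRing.isMaximal_of_irreducible hp)).of_ringEquiv
      (MvPolynomial.isEmptyRingEquiv K[X] (Fin 0)).symm
    exact h
  | succ n ih =>
    intro K _ p hp
    suffices h : LiftsSL2 (MvPolynomial (Fin n) K[X])[X] (C (MvPolynomial.C p)) by
      have h' := h.of_ringEquiv (MvPolynomial.finSuccEquiv K[X] n).symm.toRingEquiv
      convert h' using 1
      apply (MvPolynomial.finSuccEquiv K[X] n).injective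
      simp [MvPolynomial.finSuccEquiv_apply]
    exact liftsSL2_polynomial_mvPolynomial (F := FractionRing K[X]) n hp (ih hp)
      (ih (irreducible_map_fractionRing _ hp))

theorem exists_eq_mul_of_det_eq_zero {R : Type*} [CommRing R] [IsDomain R]
    [UniqueFactorizationMonoid R] (b : Matrix (Fin 2) (Fin 2) R) (hb : b.det = 0) :
    ∃ u v : Fin 2 → R, ∀ i j, b i j = u i * v j := by
  rw [Matrix.det_fin_two] at hb
  simp only [Fin.forall_fin_two]
  by_cases h0 : b 0 0 = 0
  · have h1 : b 0 1 * b 1 0 = 0 := by linear_combination b 1 1 * h0 - hb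
    rcases mul_eq_zero.1 h1 with h1 | h1
    · exact ⟨![0, 1], b 1, by simp [h0, h1]⟩
    · exact ⟨fun i => b i 1, ![0, 1], by simp [h0, h1]⟩
  · obtain ⟨x, y, g, hxy, hx, hy⟩ :=
      UniqueFactorizationMonoid.exists_reduced_factors (b 0 0) h0 (b 0 1)
    have hg : g ≠ 0 := by
      rintro rfl
      exact h0 (by rw [← hx, zero_mul])
    have hx0 : x ≠ 0 := by
      rintro rfl
      exact h0 (by rw [← hx, mul_zero])
    have h1 : x * b 1 1 = y * b 1 0 := by
      apply mul_left_cancel₀ hg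
      linear_combination b 1 1 * hx - b 1 0 * hy + hb
    obtain ⟨h, hh⟩ := hxy.dvd_of_dvd_mul_left ⟨b 1 1, h1.symm⟩
    have h2 : b 1 1 = h * y := by
      apply mul_left_cancel₀ hx0
      rw [h1, hh]
      ring
    exact ⟨![g, h], ![x, y], by simp [hx, hy, h2, hh, mul_comm]⟩

theorem mem_minorsSet_one {R : Type*} [CommRing R] {l m : ℕ} {F : Matrix (Fin l) (Fin m) R}
    {a : R} : a ∈ minorsSet 1 F ↔ ∃ i j, a = F i j := by
  constructor
  · rintro ⟨f, g, _, _, rfl⟩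
    exact ⟨f 0, g 0, by simp⟩
  · rintro ⟨i, j, rfl⟩
    exact ⟨fun _ => i, fun _ => j, Subsingleton.strictMono _, Subsingleton.strictMono _, by simp⟩

theorem det_eq_zero_of_rank_eq_one {R : Type*} [CommRing R] [IsDomain R]
    {F : Matrix (Fin 2) (Fin 2) R} (hF : F.rank = 1) : F.det = 0 := by
  by_contra h
  have hinj : Function.Injective F.mulVecLin := by
    rw [injective_iff_map_eq_zero]
    exact fun v hv => Matrix.eq_zero_of_mulVec_eq_zero h hv
  have := LinearMap.finrank_range_of_inj hinj
  rw [Matrix.rank, this] at hF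
  simp at hF

/-- Over a UFD, a rank one matrix with unimodular reduced entries has its second row killed by a
matrix of determinant one. -/
theorem exists_det_eq_one_mul_row_eq_zero {R : Type*} [CommRing R] [IsDomain R]
    [UniqueFactorizationMonoid R] (F : Matrix (Fin 2) (Fin 2) R) (hrank : F.rank = 1)
    (hJ : ∃ d, IsGcdOf d (minorsSet 1 F) ∧ Ideal.span {b | d * b ∈ minorsSet 1 F} = ⊤) :
    ∃ U : Matrix (Fin 2) (Fin 2) R, U.det = 1 ∧ ∀ j, (U * F) 1 j = 0 := by
  obtain ⟨d, ⟨hd, -⟩, hspan⟩ := hJ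
  have hdvd : ∀ i j, d ∣ F i j := fun i j => hd _ (mem_minorsSet_one.2 ⟨i, j, rfl⟩)
  choose b hb using hdvd
  have hd0 : d ≠ 0 := by
    rintro rfl
    have : F = 0 := by
      ext i j
      simp [hb i j]
    simp [this] at hrank
  have hFb : F = d • Matrix.of b := by
    ext i j
    simp [hb i j]
  have hdet : (Matrix.of b).det = 0 := by
    have h := det_eq_zero_of_rank_eq_one hrank
    rw [hFb, Matrix.det_smul] at h
    exact (mul_eq_zero.1 h).resolve_left (pow_ne_zero _ hd0)
  obtain ⟨u, v, huv⟩ := exists_eq_mul_of_det_eq_zero _ hdet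
  have hu : (1 : R) ∈ Ideal.span {u 0, u 1} := by
    have hle : Ideal.span {b | d * b ∈ minorsSet 1 F} ≤ Ideal.span {u 0, u 1} := by
      rw [Ideal.span_le]
      intro c hc
      obtain ⟨i, j, hij⟩ := mem_minorsSet_one.1 hc
      rw [hb i j] at hij
      rw [mul_left_cancel₀ hd0 hij]
      have h1 : b i j = u i * v j := huv i j
      rw [h1]
      refine Ideal.mul_mem_right _ _ (Ideal.subset_span ?_)
      fin_cases i <;> simp
    rw [hspan] at hle
    exact hle trivial
  obtain ⟨α, β, hαβ⟩ := Ideal.mem_span_pair.1 hu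
  refine ⟨!![α, β; -u 1, u 0], ?_, fun j => ?_⟩
  · rw [Matrix.det_fin_two_of]
    linear_combination hαβ
  · have h0 : b 0 j = u 0 * v j := huv 0 j
    have h1 : b 1 j = u 1 * v j := huv 1 j
    simp only [Matrix.mul_apply, Fin.sum_univ_two, hb, h0, h1, Matrix.of_apply, Matrix.cons_val',
      Matrix.cons_val_zero, Matrix.cons_val_one, Matrix.cons_val_fin_one]
    ring

/-- Regard `K[x₁, …, xₙ₊₁]` as a polynomial ring over `K[x₁]`. -/
noncomputable def firstVarEquiv (K : Type*) [Field K] (n : ℕ) :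
    MvPolynomial (Fin (n + 1)) K ≃+* MvPolynomial (Fin n) K[X] :=
  (MvPolynomial.renameEquiv K (_root_.finSuccEquiv n)).toRingEquiv.trans
    (MvPolynomial.optionEquivRight K (Fin n)).toRingEquiv

theorem firstVarEquiv_polyImage {K : Type*} [Field K] (n : ℕ) (p : K[X]) :
    firstVarEquiv K n (polyImage n p) = MvPolynomial.C p := by
  have : ((firstVarEquiv K n).toRingHom.comp
      (aeval (MvPolynomial.X (0 : Fin (n + 1)) : MvPolynomial (Fin (n + 1)) K)).toRingHom) =
      MvPolynomial.C := by
    ext x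
    · simp [firstVarEquiv]
    · simp [firstVarEquiv]
  exact congrArg (fun g => g p) this

theorem piBar_eq {K : Type*} [Field K] (n : ℕ) (p : K[X]) :
    piBar n p = (MvPolynomial.map (Ideal.Quotient.mk (Ideal.span {p}))).comp
      (firstVarEquiv K n).toRingHom := by
  apply MvPolynomial.ringHom_ext
  · intro k
    simp [piBar, firstVarEquiv]
    rfl
  · intro i
    refine Fin.cases ?_ (fun j => ?_) i
    · simp [piBar, firstVarEquiv]
    · simp [piBar, firstVarEquiv]

theorem piBar_surjective {K : Type*} [Field K] (n : ℕ) (p : K[X]) :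
    Function.Surjective (piBar n p) := by
  rw [piBar_eq]
  exact (MvPolynomial.map_surjective _ Ideal.Quotient.mk_surjective).comp
    (firstVarEquiv K n).surjective

theorem piBar_eq_zero_iff {K : Type*} [Field K] (n : ℕ) (p : K[X])
    (a : MvPolynomial (Fin (n + 1)) K) : piBar n p a = 0 ↔ polyImage n p ∣ a := by
  rw [← map_dvd_iff (firstVarEquiv K n), firstVarEquiv_polyImage, piBar_eq,
    MvPolynomial.C_dvd_iff_map_hom_eq_zero (Ideal.Quotient.mk (Ideal.span {p})) p]
  · rfl
  · intro r
    rw [Ideal.Quotient.eq_zero_iff_mem, Ideal.mem_span_singleton]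


theorem LiftsSL2.exists_mul_eq_diagonal_mul {R S : Type*} [CommRing R] [CommRing S] [IsDomain S]
    [UniqueFactorizationMonoid S] {p : R} (hlift : LiftsSL2 R p) {π : R →+* S}
    (hπ : Function.Surjective π) (hker : ∀ a, π a = 0 ↔ p ∣ a)
    (F : Matrix (Fin 2) (Fin 2) R) (hrank : (F.map π).rank = 1)
    (hJ : ∃ d, IsGcdOf d (minorsSet 1 (F.map π)) ∧
      Ideal.span {b | d * b ∈ minorsSet 1 (F.map π)} = ⊤) :
    ∃ U G : Matrix (Fin 2) (Fin 2) R, IsUnit U.det ∧ U * F = Matrix.diagonal ![1, p] * G := by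
  obtain ⟨W, hW, hWF⟩ := exists_det_eq_one_mul_row_eq_zero _ hrank hJ
  choose M hM using fun i j => hπ (W i j)
  have hMW : π.mapMatrix (Matrix.of M) = W := by
    ext1 i j
    exact hM i j
  obtain ⟨U, hU, hUM⟩ := hlift (Matrix.of M) (by
    rw [← hker, map_sub, RingHom.map_det, hMW, hW, map_one, sub_self])
  have hUW : π.mapMatrix U = W := by
    rw [← hMW]
    ext1 i j
    have h := (hker _).2 (hUM i j)
    rw [map_sub, sub_eq_zero] at h
    exact h
  have hdvd : ∀ j, p ∣ (U * F) 1 j := fun j => by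
    rw [← hker, ← hWF j, ← hUW, ← RingHom.mapMatrix_apply, ← map_mul]
    rfl
  choose G hG using hdvd
  refine ⟨U, Matrix.of ![(U * F) 0, G], by simp [hU], ?_⟩
  ext1 i j
  rw [Matrix.diagonal_mul]
  fin_cases i
  · simp
  · simpa using hG j

theorem LiftsSL2.exists_mul_eq_diagonal_mul_mvPolynomial {σ τ K k : Type*} [CommRing K]
    [CommRing k] [IsDomain (MvPolynomial τ k)] [UniqueFactorizationMonoid (MvPolynomial τ k)]
    {p : MvPolynomial σ K} (hlift : LiftsSL2 _ p) {π : MvPolynomial σ K →+* MvPolynomial τ k}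
    (hπ : Function.Surjective π) (hker : ∀ a, π a = 0 ↔ p ∣ a)
    (F : Matrix (Fin 2) (Fin 2) (MvPolynomial σ K)) (hrank : (F.map π).rank = 1)
    (hJ : ∃ d, IsGcdOf d (minorsSet 1 (F.map π)) ∧
      Ideal.span {b | d * b ∈ minorsSet 1 (F.map π)} = ⊤) :
    ∃ U G : Matrix (Fin 2) (Fin 2) (MvPolynomial σ K),
      IsUnit U.det ∧ U * F = Matrix.diagonal ![1, p] * G :=
  hlift.exists_mul_eq_diagonal_mul hπ hker F hrank hJ

end

/-- let `F ∈ A^{2×2}` with `p ∈ K[x₁]` irreducible.  If `rank F̄ = 1`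
and the `1 × 1` reduced minors of `F̄` generate the unit ideal of `Ā`
(`J₁(F̄) = Ā`), then there is `U ∈ GL₂(A)` with `U·F = diag(1, p)·G`
for some `G ∈ A^{2×2}`. -/
theorem stmt6 {K : Type*} [Field K] {n : ℕ} (p : Polynomial K) (hp : Irreducible p)
    (F : Matrix (Fin 2) (Fin 2) (MvPolynomial (Fin (n + 1)) K))
    (hrank : (F.map (piBar n p)).rank = 1)
    (hJ : ∃ d, IsGcdOf d (minorsSet 1 (F.map (piBar n p))) ∧
      Ideal.span {b | d * b ∈ minorsSet 1 (F.map (piBar n p))} = ⊤) :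
    ∃ (U G : Matrix (Fin 2) (Fin 2) (MvPolynomial (Fin (n + 1)) K)),
      IsUnit U.det ∧ U * F = Matrix.diagonal ![1, polyImage n p] * G := by
  have hmax : (Ideal.span {p}).IsMaximal := PrincipalIdealRing.isMaximal_of_irreducible hp
  have hlift : LiftsSL2 (MvPolynomial (Fin (n + 1)) K) (polyImage n p) := by
    have h := (liftsSL2_mvPolynomial n hp).of_ringEquiv (firstVarEquiv K n).symm
    rwa [← firstVarEquiv_polyImage, RingEquiv.symm_apply_apply] at h
  have hufd : IsDomain (MvPolynomial (Fin n) (Polynomial K ⧸ Ideal.span {p})) ∧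
      UniqueFactorizationMonoid (MvPolynomial (Fin n) (Polynomial K ⧸ Ideal.span {p})) := by
    let := Ideal.Quotient.field (Ideal.span {p})
    exact ⟨inferInstance, inferInstance⟩
  obtain ⟨_, _⟩ := hufd
  exact hlift.exists_mul_eq_diagonal_mul_mvPolynomial (k := Polynomial K ⧸ Ideal.span {p})
    (π := piBar n p) (piBar_surjective n p) (piBar_eq_zero_iff n p) F hrank hJ
end

section
/- Let K be a field, A = K[x_1, ..., x_n], p ∈ K[x_1] an irreducible polynomial, Ā = (K[x_1]/⟨p⟩)[x_2, ..., x_n], and π : A → Ā the natural ring homomorphism; write F̄ for the entrywise image of F under π. Let F ∈ A^{l×l}. If rank(F̄) = r and the r × r reduced minors of F̄ generate the unit ideal of Ā (i.e. J_r(F̄) = Ā), then there exists U ∈ GL_l(A) such that U·F = diag(1, ..., 1, p, ..., p)·G for some G ∈ A^{l×l}, where the diagonal matrix has exactly r entries equal to 1 and l − r entries equal to p. -/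
universe u

/-- The substitution fixing `X 0` and sending `X i` to `X i + c • X 0 ^ (N ^ i)` for `i ≠ 0`. -/
noncomputable def shearHom (R : Type*) [CommRing R] (n N : ℕ) (c : R) :
    MvPolynomial (Fin (n + 1)) R →ₐ[R] MvPolynomial (Fin (n + 1)) R :=
  MvPolynomial.aeval fun i ↦ if i = 0 then MvPolynomial.X 0
    else MvPolynomial.X i + c • MvPolynomial.X 0 ^ N ^ i.1

theorem shearHom_comp_neg (R : Type*) [CommRing R] (n N : ℕ) (c : R) :
    (shearHom R n N c).comp (shearHom R n N (-c)) = AlgHom.id _ _ := by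
  rw [shearHom, shearHom, MvPolynomial.comp_aeval, ← MvPolynomial.aeval_X_left]
  ext i v
  cases i using Fin.cases <;> simp

/-- The automorphism fixing `X 0` and sending `X i` to `X i + X 0 ^ (N ^ i)` for `i ≠ 0`. -/
noncomputable def shear (R : Type*) [CommRing R] (n N : ℕ) :
    MvPolynomial (Fin (n + 1)) R ≃ₐ[R] MvPolynomial (Fin (n + 1)) R :=
  AlgEquiv.ofAlgHom (shearHom R n N 1) (shearHom R n N (-1))
    (shearHom_comp_neg R n N 1) (by simpa using shearHom_comp_neg R n N (-1))

theorem shear_X_zero (R : Type*) [CommRing R] (n N : ℕ) :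
    shear R n N (MvPolynomial.X 0) = MvPolynomial.X 0 := by
  simp [shear, shearHom]

theorem shear_X_succ (R : Type*) [CommRing R] (n N : ℕ) (i : Fin n) :
    shear R n N (MvPolynomial.X i.succ) =
      MvPolynomial.X i.succ + MvPolynomial.X 0 ^ N ^ (i.1 + 1) := by
  simp [shear, shearHom]

theorem map_shear {R S : Type*} [CommRing R] [CommRing S] (φ : R →+* S) (n N : ℕ)
    (f : MvPolynomial (Fin (n + 1)) R) :
    MvPolynomial.map φ (shear R n N f) = shear S n N (MvPolynomial.map φ f) := by
  suffices h : (MvPolynomial.map φ).comp (shear R n N : _ →+* _) =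
      ((shear S n N : _ →+* _)).comp (MvPolynomial.map φ) from congr($h f)
  apply MvPolynomial.ringHom_ext
  · intro r
    simp [shear, shearHom]
  · intro i
    cases i using Fin.cases <;> simp [shear_X_zero, shear_X_succ]

section
open MvPolynomial

variable {k : Type*} [Field k] {n : ℕ}

theorem sum_pow_mul_ne {N : ℕ} (hN : 1 < N) {v w : Fin (n + 1) →₀ ℕ}
    (hv : ∀ i, v i < N) (hw : ∀ i, w i < N) (ne : v ≠ w) :
    ∑ i : Fin (n + 1), N ^ i.1 * v i ≠ ∑ i : Fin (n + 1), N ^ i.1 * w i := by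
  intro h
  refine ne <| Finsupp.ext <| congrFun <| List.ofFn_inj.mp ?_
  apply Nat.ofDigits_inj_of_len_eq hN (by simp) (by grind) (by grind)
  simpa only [Nat.ofDigits_eq_sum_mapIdx, List.mapIdx_eq_ofFn, List.get_ofFn, List.length_ofFn,
    Fin.val_cast, mul_comm, List.sum_ofFn] using! h

theorem finSuccEquiv_shear_X_succ (R : Type*) [CommRing R] (N : ℕ) (i : Fin n) :
    finSuccEquiv R n (shear R n N (X i.succ)) =
      Polynomial.X ^ N ^ (i.1 + 1) + Polynomial.C (X i) := by
  rw [shear_X_succ, map_add, map_pow, finSuccEquiv_X_zero, finSuccEquiv_X_succ, add_comm]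

theorem monic_finSuccEquiv_shear_X {N : ℕ} (hN : 1 < N) (i : Fin (n + 1)) :
    (finSuccEquiv k n (shear k n N (X i))).Monic ∧
      (finSuccEquiv k n (shear k n N (X i))).natDegree = N ^ i.1 := by
  cases i using Fin.cases with
  | zero => simp [shear_X_zero, finSuccEquiv_X_zero]
  | succ i =>
    rw [finSuccEquiv_shear_X_succ]
    exact ⟨Polynomial.monic_X_pow_add_C _ (pow_ne_zero _ (by lia)),
      Polynomial.natDegree_X_pow_add_C⟩

theorem finSuccEquiv_shear_monomial {N : ℕ} (hN : 1 < N) (v : Fin (n + 1) →₀ ℕ) (a : k) :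
    ∃ q : Polynomial (MvPolynomial (Fin n) k), q.Monic ∧
      q.natDegree = ∑ i : Fin (n + 1), N ^ i.1 * v i ∧
      finSuccEquiv k n (shear k n N (monomial v a)) = Polynomial.C (C a) * q := by
  refine ⟨∏ i, finSuccEquiv k n (shear k n N (X i)) ^ v i,
    Polynomial.monic_prod_of_monic _ _ fun i _ ↦ (monic_finSuccEquiv_shear_X hN i).1.pow _, ?_, ?_⟩
  · rw [Polynomial.natDegree_prod_of_monic _ _
      fun i _ ↦ (monic_finSuccEquiv_shear_X hN i).1.pow _]
    refine Finset.sum_congr rfl fun i _ ↦ ?_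
    rw [(monic_finSuccEquiv_shear_X hN i).1.natDegree_pow, (monic_finSuccEquiv_shear_X hN i).2,
      mul_comm]
  · rw [monomial_eq, Finsupp.prod_fintype _ _ fun i ↦ pow_zero _]
    have hC : shear k n N (C a) = C a := (shear k n N).commutes a
    simp only [map_mul, map_prod, map_pow, hC]
    congr 1
    exact (finSuccEquiv k n).commutes a

theorem exists_shear_leadingCoeff {f : MvPolynomial (Fin (n + 1)) k} (hf : f ≠ 0) :
    ∃ (N : ℕ) (a : k), a ≠ 0 ∧ (finSuccEquiv k n (shear k n N f)).leadingCoeff = C a := by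
  set N := 2 + f.totalDegree with hNdef
  have hN : 1 < N := by lia
  choose q hq hdeg heq using fun v ↦ finSuccEquiv_shear_monomial (k := k) (n := n) hN v (f.coeff v)
  have hlt : ∀ v ∈ f.support, ∀ i, v i < N := fun v hv i ↦
    lt_of_le_of_lt ((monomial_le_degreeOf i hv).trans (degreeOf_le_totalDegree f i)) (by lia)
  have hdeg' : ∀ v ∈ f.support, (Polynomial.C (C (f.coeff v)) * q v).degree =
      ((∑ i : Fin (n + 1), N ^ i.1 * v i : ℕ) : WithBot ℕ) := by
    intro v hv
    have hne : (C (f.coeff v) : MvPolynomial (Fin n) k) ≠ 0 := by simpa using hv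
    rw [Polynomial.degree_C_mul hne, Polynomial.degree_eq_natDegree (hq v).ne_zero, hdeg v]
  obtain ⟨v, hv, hmax⟩ := Finset.exists_max_image f.support
    (fun v ↦ ∑ i : Fin (n + 1), N ^ i.1 * v i) (support_nonempty.mpr hf)
  refine ⟨N, f.coeff v, by simpa using hv, ?_⟩
  have hsum : finSuccEquiv k n (shear k n N f) =
      ∑ w ∈ f.support \ {v}, Polynomial.C (C (f.coeff w)) * q w +
        Polynomial.C (C (f.coeff v)) * q v := by
    conv_lhs => rw [← f.support_sum_monomial_coeff]
    rw [Finset.sum_eq_add_sum_sdiff_singleton_of_mem hv]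
    simp only [map_add, map_sum, heq]
    rw [add_comm]
  rw [hsum, Polynomial.leadingCoeff_add_of_degree_lt, Polynomial.leadingCoeff_mul,
    (hq v).leadingCoeff, mul_one, Polynomial.leadingCoeff_C]
  refine lt_of_le_of_lt (Polynomial.degree_sum_le _ _) ?_
  rw [Finset.sup_lt_iff (by rw [hdeg' v hv]; exact WithBot.bot_lt_coe _)]
  intro w hw
  obtain ⟨hw, hwv⟩ := Finset.mem_sdiff.mp hw
  rw [hdeg' v hv, hdeg' w hw]
  exact_mod_cast lt_of_le_of_ne (hmax w hw)
    (sum_pow_mul_ne hN (hlt w hw) (hlt v hv) (by simpa using hwv))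

end

open Matrix in
/-- Two rows over `D` are related if an invertible matrix over `C`, mapped along `φ : C → D`,
carries one to the other. -/
def RowEquiv {ι C D : Type*} [Fintype ι] [DecidableEq ι] [CommRing C] [CommRing D]
    (φ : C →+* D) (v w : ι → D) : Prop :=
  ∃ U : GL ι C, v ᵥ* (U : Matrix ι ι C).map φ = w

namespace RowEquiv
open Matrix

variable {ι C D : Type*} [Fintype ι] [DecidableEq ι] [CommRing C] [CommRing D]
  {φ : C →+* D} {u v w : ι → D}

theorem refl (φ : C →+* D) (v : ι → D) : RowEquiv φ v v :=
  ⟨1, by simp⟩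

theorem trans (h : RowEquiv φ u v) (h' : RowEquiv φ v w) : RowEquiv φ u w := by
  obtain ⟨U, rfl⟩ := h
  obtain ⟨V, rfl⟩ := h'
  exact ⟨U * V, by rw [Units.val_mul, Matrix.map_mul, Matrix.vecMul_vecMul]⟩

theorem symm (h : RowEquiv φ u v) : RowEquiv φ v u := by
  obtain ⟨U, rfl⟩ := h
  refine ⟨U⁻¹, ?_⟩
  rw [Matrix.vecMul_vecMul, ← Matrix.map_mul, Units.mul_inv]
  simp

theorem smul (h : RowEquiv φ u v) (a : D) : RowEquiv φ (a • u) (a • v) := by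
  obtain ⟨U, rfl⟩ := h
  exact ⟨U, by rw [Matrix.smul_vecMul]⟩

theorem map {C' D' : Type*} [CommRing C'] [CommRing D'] {φ' : C' →+* D'}
    (f : C →+* C') (g : D →+* D') (hfg : φ'.comp f = g.comp φ) (h : RowEquiv φ u v) :
    RowEquiv φ' (g ∘ u) (g ∘ v) := by
  obtain ⟨U, rfl⟩ := h
  refine ⟨GeneralLinearGroup.map f U, ?_⟩
  ext i
  have h (a : C) : φ' (f a) = g (φ a) := congr($hfg a)
  simp [Matrix.vecMul, dotProduct, h]

theorem of_linearEquiv (φ : C →+* D) (e : (ι → C) ≃ₗ[C] (ι → C)) (v : ι → C) :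
    RowEquiv φ (φ ∘ v) (φ ∘ e v) := by
  have key : ∀ (g h : (ι → C) →ₗ[C] (ι → C)), g ∘ₗ h = LinearMap.id →
      (LinearMap.toMatrix' h)ᵀ * (LinearMap.toMatrix' g)ᵀ = 1 := fun g h hgh ↦ by
    rw [← Matrix.transpose_mul, ← LinearMap.toMatrix'_comp, hgh, LinearMap.toMatrix'_id,
      Matrix.transpose_one]
  refine ⟨⟨(LinearMap.toMatrix' e.toLinearMap)ᵀ, (LinearMap.toMatrix' e.symm.toLinearMap)ᵀ,
    key _ _ (by ext; simp), key _ _ (by ext; simp)⟩, ?_⟩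
  have : e v = v ᵥ* (LinearMap.toMatrix' e.toLinearMap)ᵀ := by
    rw [Matrix.vecMul_transpose, LinearMap.toMatrix'_mulVec]
    rfl
  rw [this]
  ext i
  simp [Matrix.vecMul, dotProduct]

theorem perm (φ : C →+* D) (σ : Equiv.Perm ι) (v : ι → D) : RowEquiv φ v (v ∘ σ) := by
  have key : ∀ τ : Equiv.Perm ι, (τ.permMatrix C) * (τ⁻¹.permMatrix C) = 1 := fun τ ↦ by
    rw [← Matrix.permMatrix_mul]; simp
  refine ⟨⟨σ⁻¹.permMatrix C, σ.permMatrix C, by simpa using key σ⁻¹, key σ⟩, ?_⟩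
  ext i
  simp [Matrix.vecMul, dotProduct, Equiv.Perm.permMatrix, PEquiv.toMatrix_apply,
    Equiv.symm_apply_eq, apply_ite φ]

/-- Adding multiples of the entry at `i` to the other entries. -/
theorem add_mul (φ : C →+* D) (i : ι) (v : ι → C) (a : ι → C) (ha : a i = 0) :
    RowEquiv φ (φ ∘ v) (φ ∘ (v + v i • a)) := by
  let e : (ι → C) ≃ₗ[C] (ι → C) :=
    { toFun := fun x ↦ x + x i • a
      invFun := fun x ↦ x - x i • a
      map_add' := fun x y ↦ by simp [add_smul]; abel
      map_smul' := fun c x ↦ by simp [mul_smul]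
      left_inv := fun x ↦ by simp [ha]
      right_inv := fun x ↦ by simp [ha] }
  exact of_linearEquiv φ e v

/-- Adding to the entry at `i` a combination of the other entries. -/
theorem add_dotProduct (φ : C →+* D) (i : ι) (v : ι → C) (a : ι → C) (ha : a i = 0) :
    RowEquiv φ (φ ∘ v) (φ ∘ (v + Pi.single i (a ⬝ᵥ v))) := by
  let e : (ι → C) ≃ₗ[C] (ι → C) :=
    { toFun := fun x ↦ x + Pi.single i (a ⬝ᵥ x)
      invFun := fun x ↦ x - Pi.single i (a ⬝ᵥ x)
      map_add' := fun x y ↦ by simp [dotProduct_add, Pi.single_add]; abel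
      map_smul' := fun c x ↦ by
        ext t
        by_cases h : t = i <;> simp [h, mul_add]
      left_inv := fun x ↦ by simp [dotProduct_add, ha]
      right_inv := fun x ↦ by simp [dotProduct_sub, ha] }
  exact of_linearEquiv φ e v

/-- Acting on the entries at `i ≠ j` by a `2 × 2` matrix of determinant one. -/
theorem special_two (φ : C →+* D) {i j : ι} (hij : i ≠ j) (v : ι → C) (a b c d : C)
    (hdet : a * d - b * c = 1) :
    RowEquiv φ (φ ∘ v)
      (φ ∘ Function.update (Function.update v i (a * v i + c * v j)) j (b * v i + d * v j)) := by
  let e : (ι → C) ≃ₗ[C] (ι → C) :=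
    { toFun := fun v ↦
        Function.update (Function.update v i (a * v i + c * v j)) j (b * v i + d * v j)
      invFun := fun v ↦
        Function.update (Function.update v i (d * v i - c * v j)) j (a * v j - b * v i)
      map_add' := fun x y ↦ by
        ext t
        by_cases h : t = j <;> by_cases h' : t = i <;> simp [h, h', hij] <;> ring
      map_smul' := fun r x ↦ by
        ext t
        by_cases h : t = j <;> by_cases h' : t = i <;> simp [h, h', hij] <;> ring
      left_inv := fun x ↦ by
        ext t
        by_cases h : t = j
        · subst h; simp [hij]; linear_combination (x t) * hdet
        · by_cases h' : t = i
          · subst h'; simp [hij]; linear_combination (x t) * hdet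
          · simp [h, h']
      right_inv := fun x ↦ by
        ext t
        by_cases h : t = j
        · subst h; simp [hij]; linear_combination (x t) * hdet
        · by_cases h' : t = i
          · subst h'; simp [hij]; linear_combination (x t) * hdet
          · simp [h, h'] }
  exact of_linearEquiv φ e v

end RowEquiv

section
open Matrix Polynomial

theorem exists_comp_add_C_mul {B : Type*} [CommRing B] (q b b' : B[X]) (c : B) :
    ∃ d : B[X], q.comp (b + C c * b') = q.comp b + C c * d := by
  obtain ⟨d, hd⟩ := Polynomial.sub_dvd_eval_sub (b + C c * b') b (q.map C)
  refine ⟨b' * d, ?_⟩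
  rw [Polynomial.eval_map, Polynomial.eval_map] at hd
  change q.comp _ - q.comp _ = _ at hd
  linear_combination hd

/-- If `C c` lies in the ideal of two entries `f i`, `f j` of a row of polynomials, then the
values of the row at points congruent modulo `c` are equivalent. -/
theorem RowEquiv.comp_add_C_mul {ι B D : Type*} [Fintype ι] [DecidableEq ι] [CommRing B] [IsDomain B]
    [CommRing D] (φ : B[X] →+* D) (f : ι → B[X]) {i j : ι} (hij : i ≠ j) {g h : B[X]} {c : B}
    (hc : f i * g + f j * h = C c) (b b' : B[X]) :
    RowEquiv φ (fun t ↦ φ ((f t).comp b)) (fun t ↦ φ ((f t).comp (b + C c * b'))) := by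
  rcases eq_or_ne c 0 with rfl | hc0
  · simpa using RowEquiv.refl φ _
  have hC : (C c : B[X]) ≠ 0 := by simpa using hc0
  choose δ hδ using fun q : B[X] ↦ exists_comp_add_C_mul q b b' c
  have h₀ : (f i).comp b * g.comp b + (f j).comp b * h.comp b = C c := by
    simpa using congr(($hc).comp b)
  have h₁ : (f i).comp (b + C c * b') * g.comp (b + C c * b') +
      (f j).comp (b + C c * b') * h.comp (b + C c * b') = C c := by
    simpa using congr(($hc).comp (b + C c * b'))
  simp only [hδ] at h₁ ⊢
  set x := (f i).comp b
  set y := (f j).comp b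
  set G := g.comp b
  set H := h.comp b
  have hE : x * δ g + G * δ (f i) + y * δ h + H * δ (f j) +
      C c * (δ (f i) * δ g + δ (f j) * δ h) = 0 := by
    apply mul_left_cancel₀ hC
    linear_combination h₁ - h₀
  have s₁ := RowEquiv.special_two φ hij (fun t ↦ (f t).comp b)
    (1 + G * δ (f i) + y * δ h) (G * δ (f j) - y * δ g)
    (H * δ (f i) - x * δ h) (1 + H * δ (f j) + x * δ g)
    (by linear_combination hE + (δ (f i) * δ g + δ (f j) * δ h) * h₀)
  have s₂ := s₁.trans (RowEquiv.add_mul φ i _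
    (fun t ↦ if t = i ∨ t = j then 0 else (G + C c * δ g) * δ (f t)) (by simp))
  have s₃ := s₂.trans (RowEquiv.add_mul φ j _
    (fun t ↦ if t = i ∨ t = j then 0 else (H + C c * δ h) * δ (f t)) (by simp))
  refine (congrArg (RowEquiv φ _) (funext fun t ↦ ?_)).mpr s₃
  rw [Function.comp_apply]
  congr 1
  by_cases hti : t = i
  · subst hti
    simp [hij]
    linear_combination -(δ (f t)) * h₀
  · by_cases htj : t = j
    · subst htj
      simp [hij, hti]
      linear_combination -(δ (f t)) * h₀
    · simp [hij, hij.symm, hti, htj]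
      linear_combination (-δ (f t)) * h₁ - δ (f t) * (G + C c * δ g) * δ (f i) * h₀
        - δ (f t) * (H + C c * δ h) * δ (f j) * h₀

theorem exists_isCoprime_add_mul {R : Type*} [CommRing R] [IsDomain R] [IsPrincipalIdealRing R]
    {a b : R} (f : R) (hf : f ≠ 0) (h : ∃ x y z, x * f + y * a + z * b = 1) :
    ∃ t, IsCoprime f (a + t * b) := by
  induction f using UniqueFactorizationMonoid.induction_on_prime with
  | h₁ => exact absurd rfl hf
  | h₂ u hu =>
    obtain ⟨s, hs⟩ := hu.exists_left_inv
    exact ⟨0, s, 0, by simpa using hs⟩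
  | h₃ f π hf' hπ ih =>
    obtain ⟨x, y, z, hxyz⟩ := h
    obtain ⟨t, ht⟩ := ih hf' ⟨x * π, y, z, by linear_combination hxyz⟩
    by_cases hdvd : π ∣ a + t * b
    · refine ⟨t + f, IsCoprime.mul_left ?_ ?_⟩
      · rw [hπ.irreducible.coprime_iff_not_dvd]
        intro hd
        have hfb : π ∣ f * b := by
          have := dvd_sub hd hdvd
          convert this using 1
          ring
        rcases hπ.dvd_or_dvd hfb with h | h
        · exact hπ.not_isUnit (ht.isUnit_of_dvd' h hdvd)
        · have ha : π ∣ a := (dvd_add_left (h.mul_left t)).mp hdvd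
          refine hπ.not_isUnit (isUnit_of_dvd_one (hxyz ▸ ?_))
          exact dvd_add (dvd_add ((dvd_mul_right π f).mul_left x) (ha.mul_left y)) (h.mul_left z)
      · obtain ⟨r, s, hrs⟩ := ht
        exact ⟨r - s * b, s, by linear_combination hrs⟩
    · exact ⟨t, IsCoprime.mul_left (hπ.irreducible.coprime_iff_not_dvd.mpr hdvd) ht⟩

theorem exists_isCoprime_add_dotProduct {ι R : Type*} [Fintype ι] [DecidableEq ι] [CommRing R]
    [IsDomain R] [IsPrincipalIdealRing R] (v : ι → R) {i j : ι} (hij : i ≠ j) (hi : v i ≠ 0)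
    (hv : ∃ w, w ⬝ᵥ v = 1) :
    ∃ a : ι → R, a i = 0 ∧ a j = 0 ∧ IsCoprime (v i) (v j + a ⬝ᵥ v) := by
  obtain ⟨w, hw⟩ := hv
  let w' : ι → R := fun t ↦ if t = i ∨ t = j then 0 else w t
  have hww : w = Pi.single i (w i) + Pi.single j (w j) + w' := by
    ext t
    by_cases hti : t = i
    · subst hti; simp [w', hij]
    · by_cases htj : t = j
      · subst htj; simp [w', hti]
      · simp [w', hti, htj]
  obtain ⟨t, ht⟩ := exists_isCoprime_add_mul (a := v j) (b := w' ⬝ᵥ v) (v i) hi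
    ⟨w i, w j, 1, by
      conv_rhs => rw [← hw, hww, add_dotProduct, add_dotProduct]
      simp⟩
  exact ⟨t • w', by simp [w'], by simp [w'], by simpa using ht⟩

/-- Modulo a maximal ideal `m`, a unimodular row with a monic entry has an element of `B`
outside `m` in the ideal of two of its entries, after a column operation. -/
theorem exists_C_mem_span_pair {ι B : Type*} [Fintype ι] [DecidableEq ι] [CommRing B]
    (m : Ideal B) [hm : m.IsMaximal] (f : ι → B[X]) {i j : ι} (hij : i ≠ j) (hi : (f i).Monic)
    (hf : ∃ w : ι → (B ⧸ m)[X], w ⬝ᵥ (fun t ↦ (f t).map (Ideal.Quotient.mk m)) = 1) :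
    ∃ c ∉ m, ∃ a : ι → B[X], a i = 0 ∧ a j = 0 ∧
      ∃ g h, f i * g + (f j + a ⬝ᵥ f) * h = C c := by
  let _ := Ideal.Quotient.field m
  set ψ := mapRingHom (Ideal.Quotient.mk m) with hψ
  have hsurj : Function.Surjective ψ := Polynomial.map_surjective _ Ideal.Quotient.mk_surjective
  obtain ⟨a', hai, haj, hcop⟩ := exists_isCoprime_add_dotProduct (fun t ↦ ψ (f t)) hij
    (hi.map _).ne_zero hf
  choose s hs using hsurj
  let a : ι → B[X] := fun t ↦ if t = i ∨ t = j then 0 else s (a' t)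
  have haψ : ∀ t, ψ (a t) = a' t := fun t ↦ by
    by_cases hti : t = i
    · simp [a, hti, hai]
    · by_cases htj : t = j
      · simp [a, htj, haj]
      · simp [a, hti, htj, hs]
  set q := f j + a ⬝ᵥ f with hq
  have hqψ : ψ q = ψ (f j) + a' ⬝ᵥ (fun t ↦ ψ (f t)) := by
    simp [hq, dotProduct, haψ]
  rw [← hqψ] at hcop
  obtain ⟨g, h, hgh⟩ := hcop
  let J : Ideal B[X] := Ideal.span {f i, q}
  have hJ : Ideal.span {f i} ≤ J := Ideal.span_mono (by simp)
  have : Module.Finite B (B[X] ⧸ Ideal.span {f i}) := hi.finite_quotient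
  have : Module.Finite B (B[X] ⧸ J) :=
    Module.Finite.of_surjective
      (Ideal.Quotient.factorₐ B hJ).toLinearMap
      (Ideal.Quotient.factor_surjective hJ)
  have hone : ∃ z ∈ m.map (C : B →+* B[X]), s g * f i + s h * q + z = 1 := by
    refine ⟨1 - (s g * f i + s h * q), ?_, by ring⟩
    rw [Ideal.mem_map_C_iff]
    intro d
    have : ψ (1 - (s g * f i + s h * q)) = 0 := by simp [hs, hgh]
    rw [← Ideal.Quotient.eq_zero_iff_mem, ← Polynomial.coeff_map]
    exact congr(($this).coeff d)
  obtain ⟨z, hz, hz1⟩ := hone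
  have hle : (⊤ : Submodule B (B[X] ⧸ J)) ≤ m • ⊤ := by
    rintro x -
    obtain ⟨x, rfl⟩ := Ideal.Quotient.mk_surjective x
    have hx : Ideal.Quotient.mk J x = Ideal.Quotient.mk J (x * z) := by
      rw [Ideal.Quotient.eq]
      have : x - x * z = x * s g * f i + x * s h * q := by linear_combination (-x) * hz1
      rw [this]
      exact J.add_mem (J.mul_mem_left _ (Ideal.subset_span (by simp)))
        (J.mul_mem_left _ (Ideal.subset_span (by simp)))
    rw [hx]
    have hxz := (m.map C).mul_mem_left x hz
    generalize x * z = y at hxz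
    rw [Ideal.mem_map_C_iff] at hxz
    rw [y.as_sum_range_C_mul_X_pow, map_sum]
    refine sum_mem fun d _ ↦ ?_
    have : Ideal.Quotient.mk J (C (y.coeff d) * X ^ d) =
        y.coeff d • Ideal.Quotient.mk J (X ^ d) := by
      rw [← Polynomial.smul_eq_C_mul]; rfl
    rw [this]
    exact Submodule.smul_mem_smul (hxz d) trivial
  obtain ⟨c, hc, hc0⟩ := Submodule.exists_sub_one_mem_and_smul_eq_zero_of_fg_of_le_smul m ⊤
    Module.Finite.fg_top hle
  refine ⟨c, fun hcm ↦ hm.ne_top ((Ideal.eq_top_iff_one m).mpr ?_), a, by simp [a], by simp [a], ?_⟩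
  · simpa using m.sub_mem hcm hc
  · have : C c ∈ J := by
      rw [← Ideal.Quotient.eq_zero_iff_mem]
      rw [← mul_one (C c), ← Polynomial.smul_eq_C_mul]
      exact hc0 1 trivial
    obtain ⟨g, h, hgh⟩ := Ideal.mem_span_pair.mp this
    exact ⟨g, h, by rw [← hgh]; ring⟩
end

section
open Matrix Polynomial

/-- A unimodular row of polynomials with a monic entry is equivalent to its value at zero. -/
theorem RowEquiv.map_coeff_zero {ι B D : Type*} [Fintype ι] [DecidableEq ι] [CommRing B]
    [IsDomain B] [CommRing D] {φ : B →+* D} (hφ : Function.Surjective φ) (f : ι → B[X])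
    {i j : ι} (hij : i ≠ j) (hi : (f i).Monic)
    (hf : ∃ w : ι → D[X], w ⬝ᵥ (fun t ↦ (f t).map φ) = 1) :
    RowEquiv (mapRingHom φ) (fun t ↦ (f t).map φ) (fun t ↦ C (φ ((f t).coeff 0))) := by
  set Φ := mapRingHom φ with hΦ
  let I : Ideal B :=
    { carrier := {c | ∀ b b' : B[X], RowEquiv Φ (fun t ↦ Φ ((f t).comp b))
        (fun t ↦ Φ ((f t).comp (b + C c * b')))}
      add_mem' := fun {c c'} hc hc' b b' ↦ by
        have := (hc b b').trans (hc' (b + C c * b') b')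
        simpa only [map_add, _root_.add_mul, add_assoc] using this
      zero_mem' := fun b b' ↦ by simpa using RowEquiv.refl Φ _
      smul_mem' := fun r c hc b b' ↦ by
        have := hc b (C r * b')
        simpa only [smul_eq_mul, map_mul, mul_left_comm, mul_assoc] using this }
  have hker : RingHom.ker φ ≤ I := by
    intro c hc b b'
    have : ∀ t, Φ ((f t).comp (b + C c * b')) = Φ ((f t).comp b) := fun t ↦ by
      obtain ⟨d, hd⟩ := exists_comp_add_C_mul (f t) b b' c
      rw [hd, map_add, map_mul]
      simp [hΦ, (RingHom.mem_ker).mp hc]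
    simp only [this]
    exact RowEquiv.refl Φ _
  have htop : I = ⊤ := by
    by_contra hI
    obtain ⟨m, hm, hIm⟩ := Ideal.exists_le_maximal I hI
    have hfm : ∃ w : ι → (B ⧸ m)[X],
        w ⬝ᵥ (fun t ↦ (f t).map (Ideal.Quotient.mk m)) = 1 := by
      obtain ⟨w, hw⟩ := hf
      choose s hs using Polynomial.map_surjective φ hφ
      refine ⟨fun t ↦ (s (w t)).map (Ideal.Quotient.mk m), ?_⟩
      have h0 : (∑ t, s (w t) * f t - 1).map φ = 0 := by
        rw [dotProduct] at hw
        simp [Polynomial.map_sum, hs, hw]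
      have h1 : (∑ t, s (w t) * f t - 1).map (Ideal.Quotient.mk m) = 0 := by
        ext d
        have := congr(($h0).coeff d)
        rw [Polynomial.coeff_map, Polynomial.coeff_zero] at this ⊢
        exact Ideal.Quotient.eq_zero_iff_mem.mpr (hIm (hker this))
      simpa [Polynomial.map_sum, dotProduct, sub_eq_zero] using h1
    obtain ⟨c, hcm, a, hai, haj, g, h, hgh⟩ := exists_C_mem_span_pair m f hij hi hfm
    refine hcm (hIm fun b b' ↦ ?_)
    let f' : ι → B[X] := f + Pi.single j (a ⬝ᵥ f)
    have hop : ∀ b : B[X], RowEquiv Φ (fun t ↦ Φ ((f t).comp b))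
        (fun t ↦ Φ ((f' t).comp b)) := fun b ↦ by
      have := RowEquiv.add_dotProduct Φ j (fun t ↦ (f t).comp b) (fun t ↦ (a t).comp b)
        (by simp [haj])
      refine (congrArg (RowEquiv Φ _) (funext fun t ↦ ?_)).mpr this
      rw [Function.comp_apply]
      congr 1
      by_cases ht : t = j
      · subst ht
        simp [f', dotProduct, Polynomial.sum_comp]
      · simp [f', ht]
    refine ((hop b).trans ?_).trans (hop _).symm
    exact RowEquiv.comp_add_C_mul Φ f' hij (g := g) (h := h)
      (by simpa [f', hij] using hgh) b b'
  have h1 : (1 : B) ∈ I := htop ▸ trivial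
  have := (h1 0 X).symm
  simpa [hΦ, Polynomial.coeff_zero_eq_eval_zero] using this

end

section
open Matrix

theorem RowEquiv.single_of_isUnit {ι C D : Type*} [Fintype ι] [DecidableEq ι] [CommRing C]
    [CommRing D] {φ : C →+* D} (hφ : Function.Surjective φ) (v : ι → D) {j : ι}
    (hj : IsUnit (v j)) (i : ι) : RowEquiv φ v (Pi.single i (v j)) := by
  obtain ⟨s, hs⟩ := hj.exists_right_inv
  choose g hg using hφ
  have h := RowEquiv.add_mul φ j (g ∘ v) (fun t ↦ if t = j then 0 else g (-(s * v t))) (by simp)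
  have h₁ : φ ∘ g ∘ v = v := funext fun t ↦ hg _
  have h₂ : φ ∘ (g ∘ v + (g ∘ v) j • fun t ↦ if t = j then 0 else g (-(s * v t))) =
      Pi.single j (v j) := by
    ext t
    by_cases ht : t = j
    · subst ht; simp [hg]
    · simp [ht, hg]
      linear_combination (-v t) * hs
  rw [h₁, h₂] at h
  have h₃ : (Pi.single j (v j) : ι → D) ∘ Equiv.swap i j = Pi.single i (v j) := by
    ext t
    simp only [Function.comp_apply, Pi.single_apply, Equiv.swap_apply_eq_iff,
      Equiv.swap_apply_right]
  exact h₃ ▸ h.trans (RowEquiv.perm φ (Equiv.swap i j) _)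

/-- The shear followed by the identification with polynomials over one variable less. -/
noncomputable def shearFinSuccEquiv (R : Type*) [CommRing R] (n N : ℕ) :
    MvPolynomial (Fin (n + 1)) R ≃+* Polynomial (MvPolynomial (Fin n) R) :=
  ((shear R n N).trans (MvPolynomial.finSuccEquiv R n)).toRingEquiv

theorem map_shearFinSuccEquiv {R S : Type*} [CommRing R] [CommRing S] (φ : R →+* S) (n N : ℕ)
    (f : MvPolynomial (Fin (n + 1)) R) :
    (shearFinSuccEquiv R n N f).map (MvPolynomial.map φ) =
      shearFinSuccEquiv S n N (MvPolynomial.map φ f) := by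
  have h : (Polynomial.mapRingHom (MvPolynomial.map φ)).comp
      (MvPolynomial.finSuccEquiv R n).toRingEquiv.toRingHom =
      (MvPolynomial.finSuccEquiv S n).toRingEquiv.toRingHom.comp (MvPolynomial.map φ) := by
    apply MvPolynomial.ringHom_ext
    · intro r
      simp [MvPolynomial.finSuccEquiv_apply]
    · intro i
      cases i using Fin.cases <;>
        simp [MvPolynomial.finSuccEquiv_X_zero, MvPolynomial.finSuccEquiv_X_succ]
  have := congr($h (shear R n N f))
  refine this.trans ?_
  rw [RingHom.comp_apply, map_shear]
  rfl

theorem exists_shearFinSuccEquiv_leadingCoeff {k : Type*} [Field k] {n : ℕ}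
    {f : MvPolynomial (Fin (n + 1)) k} (hf : f ≠ 0) :
    ∃ (N : ℕ) (a : k), a ≠ 0 ∧
      (Polynomial.C (MvPolynomial.C a) * shearFinSuccEquiv k n N f).Monic := by
  obtain ⟨N, a, ha, h⟩ := exists_shear_leadingCoeff hf
  refine ⟨N, a⁻¹, inv_ne_zero ha, ?_⟩
  apply Polynomial.monic_C_mul_of_mul_leadingCoeff_eq_one
  change _ * (MvPolynomial.finSuccEquiv k n (shear k n N f)).leadingCoeff = _
  rw [h, ← map_mul, inv_mul_cancel₀ ha, map_one]

/-- A unimodular row over a polynomial ring over a field `L` can be carried to a multiple of a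
basis vector by an invertible matrix that lifts along a surjection `R → L`. -/
theorem exists_rowEquiv_single {R L : Type*} [CommRing R] [IsDomain R] [Field L] {φ : R →+* L}
    (hφ : Function.Surjective φ) (m : ℕ) {ι : Type*} [Fintype ι] [DecidableEq ι]
    (v : ι → MvPolynomial (Fin m) L) (hv : ∃ w, w ⬝ᵥ v = 1) (i : ι) :
    ∃ u, IsUnit u ∧ RowEquiv (MvPolynomial.map φ) v (Pi.single i u) := by
  induction m generalizing i with
  | zero =>
    obtain ⟨w, hw⟩ := hv
    obtain ⟨j, hj⟩ : ∃ j, v j ≠ 0 := by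
      by_contra! h
      simp [dotProduct, h] at hw
    have hu : IsUnit (v j) := by
      rw [← MulEquiv.isUnit_map (MvPolynomial.isEmptyRingEquiv L (Fin 0)), isUnit_iff_ne_zero]
      exact (map_ne_zero_iff _ (MvPolynomial.isEmptyRingEquiv L (Fin 0)).injective).mpr hj
    exact ⟨v j, hu, RowEquiv.single_of_isUnit (MvPolynomial.map_surjective φ hφ) v hu i⟩
  | succ m ih =>
    obtain ⟨w, hw⟩ := hv
    obtain ⟨j, hj⟩ : ∃ j, v j ≠ 0 := by
      by_contra! h
      simp [dotProduct, h] at hw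
    by_cases hsub : ∃ j', j ≠ j'
    swap
    · push Not at hsub
      have hu : IsUnit (v j) := by
        refine IsUnit.of_mul_eq_one (w j) ?_
        rw [dotProduct, Finset.sum_eq_single j (fun t _ ht ↦ absurd (hsub t).symm ht) (by simp)]
          at hw
        rw [mul_comm, hw]
      exact ⟨v j, hu, RowEquiv.single_of_isUnit (MvPolynomial.map_surjective φ hφ) v hu i⟩
    obtain ⟨j', hjj'⟩ := hsub
    obtain ⟨N, a, ha, hmonic⟩ := exists_shearFinSuccEquiv_leadingCoeff hj
    set eL := shearFinSuccEquiv L m N with heL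
    set φ' : MvPolynomial (Fin m) R →+* MvPolynomial (Fin m) L := MvPolynomial.map φ with hφ'
    have hφs : Function.Surjective φ' := MvPolynomial.map_surjective φ hφ
    set κ : Polynomial (MvPolynomial (Fin m) L) := Polynomial.C (MvPolynomial.C a) with hκ
    set κ' : Polynomial (MvPolynomial (Fin m) L) := Polynomial.C (MvPolynomial.C a⁻¹) with hκ'
    have hκκ : κ' * κ = 1 := by
      rw [hκ, hκ', ← map_mul, ← map_mul, inv_mul_cancel₀ ha, map_one, map_one]
    have hlift : ∀ t, ∃ q : Polynomial (MvPolynomial (Fin m) R),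
        q.map φ' = κ * eL (v t) ∧ (t = j → q.Monic) := by
      intro t
      by_cases ht : t = j
      · subst ht
        obtain ⟨q, hq, -, hqm⟩ := Polynomial.lifts_and_natDegree_eq_and_monic
          (f := φ') (p := κ * eL (v t))
          ((Polynomial.mem_lifts _).mpr (Polynomial.map_surjective φ' hφs _)) hmonic
        exact ⟨q, hq, fun _ ↦ hqm⟩
      · obtain ⟨q, hq⟩ := Polynomial.map_surjective φ' hφs (κ * eL (v t))
        exact ⟨q, hq, fun h ↦ absurd h ht⟩
    choose f hf hfm using hlift
    have hunim : (fun t ↦ κ' * eL (w t)) ⬝ᵥ (fun t ↦ (f t).map φ') = 1 := by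
      simp only [dotProduct, hf]
      calc _ = ∑ t, (κ' * κ) * eL (w t * v t) :=
            Finset.sum_congr rfl fun t _ ↦ by rw [map_mul]; ring
        _ = eL (w ⬝ᵥ v) := by simp [hκκ, dotProduct]
        _ = 1 := by rw [hw, map_one]
    have h₁ := RowEquiv.map_coeff_zero hφs f hjj' (hfm j rfl) ⟨_, hunim⟩
    obtain ⟨u, hu, h₂⟩ := ih (fun t ↦ φ' ((f t).coeff 0))
      ⟨fun t ↦ (κ' * eL (w t)).coeff 0, by
        have := congr(Polynomial.constantCoeff $hunim)
        simpa [dotProduct, Polynomial.constantCoeff_apply] using this⟩ i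
    have h₃ := h₁.trans (h₂.map (φ' := Polynomial.mapRingHom φ') Polynomial.C Polynomial.C
      (by ext <;> simp))
    have h₄ := (h₃.smul κ').map (φ' := MvPolynomial.map φ)
      (shearFinSuccEquiv R m N).symm.toRingHom eL.symm.toRingHom (by
        refine RingHom.ext fun x ↦ ?_
        obtain ⟨x, rfl⟩ := (shearFinSuccEquiv R m N).surjective x
        simp [map_shearFinSuccEquiv, heL, hφ'])
    refine ⟨eL.symm (κ' * Polynomial.C u), ?_, ?_⟩
    · exact (((IsUnit.of_mul_eq_one κ hκκ).mul (hu.map Polynomial.C))).map eL.symm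
    · convert h₄ using 1
      · ext1 t
        simp [hf, ← mul_assoc, hκκ]
      · ext1 t
        by_cases ht : t = i
        · subst ht; simp
        · simp [ht]

end

/-- `HasFreeResolution R n M`: the module `M` has a resolution of length at most `n` by finite free
modules. -/
def HasFreeResolution (R : Type u) [CommRing R] :
    ℕ → ∀ (M : Type u) [AddCommGroup M] [Module R M], Prop
  | 0, M, _, _ => Module.Finite R M ∧ Module.Free R M
  | n + 1, M, _, _ => ∃ (K G : Type u) (_ : AddCommGroup K) (_ : Module R K) (_ : AddCommGroup G)
      (_ : Module R G) (i : K →ₗ[R] G) (f : G →ₗ[R] M), Module.Finite R G ∧ Module.Free R G ∧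
      Function.Injective i ∧ Function.Exact i f ∧ Function.Surjective f ∧ HasFreeResolution R n K

/-- For a short exact sequence with projective quotient, the middle term is the product. -/
theorem Function.Exact.nonempty_equiv_prod {R A B C : Type*} [CommRing R] [AddCommGroup A]
    [Module R A] [AddCommGroup B] [Module R B] [AddCommGroup C] [Module R C] [Module.Projective R C]
    {i : A →ₗ[R] B} {p : B →ₗ[R] C} (h : Function.Exact i p) (hi : Function.Injective i)
    (hp : Function.Surjective p) : Nonempty (B ≃ₗ[R] A × C) := by
  obtain ⟨s, hs⟩ := Module.projective_lifting_property p LinearMap.id hp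
  exact ⟨(h.splitSurjectiveEquiv hi ⟨s, hs⟩).1⟩

namespace HasFreeResolution

variable {R : Type u} [CommRing R] {A B C M N : Type u} [AddCommGroup A] [Module R A]
  [AddCommGroup B] [Module R B] [AddCommGroup C] [Module R C] [AddCommGroup M] [Module R M]
  [AddCommGroup N] [Module R N] {n : ℕ}

theorem of_equiv (e : M ≃ₗ[R] N) (h : HasFreeResolution R n M) : HasFreeResolution R n N := by
  cases n with
  | zero =>
    obtain ⟨_, _⟩ := h
    exact ⟨Module.Finite.equiv e, Module.Free.of_equiv e⟩
  | succ n =>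
    obtain ⟨K, G, _, _, _, _, i, f, h₁, h₂, hi, hif, hf, hK⟩ := h
    refine ⟨K, G, _, _, _, _, i, e.toLinearMap ∘ₗ f, h₁, h₂, hi, ?_, e.surjective.comp hf, hK⟩
    intro x
    simpa using hif x

theorem exists_surjective (h : HasFreeResolution R (n + 1) M) :
    ∃ (G : Type u) (_ : AddCommGroup G) (_ : Module R G) (f : G →ₗ[R] M), Module.Finite R G ∧
      Module.Free R G ∧ Function.Surjective f ∧ HasFreeResolution R n (LinearMap.ker f) := by
  obtain ⟨K, G, _, _, _, _, i, f, h₁, h₂, hi, hif, hf, hK⟩ := h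
  refine ⟨G, _, _, f, h₁, h₂, hf, ?_⟩
  rw [hif.linearMap_ker_eq]
  exact hK.of_equiv (LinearEquiv.ofInjective i hi)

theorem of_ker {G : Type u} [AddCommGroup G] [Module R G] [Module.Finite R G] [Module.Free R G]
    (f : G →ₗ[R] M) (hf : Function.Surjective f) (h : HasFreeResolution R n (LinearMap.ker f)) :
    HasFreeResolution R (n + 1) M :=
  ⟨_, G, _, _, _, _, (LinearMap.ker f).subtype, f, inferInstance, inferInstance,
    Subtype.val_injective, LinearMap.exact_subtype_ker_map f, hf, h⟩

theorem of_subsingleton [Subsingleton M] : HasFreeResolution R n M := by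
  induction n generalizing M with
  | zero => exact ⟨inferInstance, inferInstance⟩
  | succ n ih => exact of_ker (0 : PUnit.{u + 1} →ₗ[R] M) (fun _ ↦ ⟨0, Subsingleton.elim _ _⟩) ih

theorem succ (h : HasFreeResolution R n M) : HasFreeResolution R (n + 1) M := by
  induction n generalizing M with
  | zero =>
    obtain ⟨_, _⟩ := h
    refine of_ker (LinearMap.id : M →ₗ[R] M) Function.surjective_id ?_
    have : Subsingleton (LinearMap.ker (LinearMap.id : M →ₗ[R] M)) := by
      rw [LinearMap.ker_id]; infer_instance
    exact of_subsingleton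
  | succ n ih =>
    obtain ⟨G, _, _, f, _, _, hf, h⟩ := h.exists_surjective
    exact of_ker f hf (ih h)

theorem mono {m : ℕ} (hnm : n ≤ m) (h : HasFreeResolution R n M) : HasFreeResolution R m M := by
  induction hnm with
  | refl => exact h
  | step _ ih => exact ih.succ

theorem of_exact {i : A →ₗ[R] B} {p : B →ₗ[R] C} (hi : Function.Injective i)
    (hip : Function.Exact i p) (hp : Function.Surjective p) (hA : HasFreeResolution R n A)
    (hC : HasFreeResolution R n C) : HasFreeResolution R n B := by
  induction n generalizing A B C with
  | zero =>
    obtain ⟨_, _⟩ := hA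
    obtain ⟨_, _⟩ := hC
    obtain ⟨e⟩ := hip.nonempty_equiv_prod hi hp
    exact ⟨Module.Finite.equiv e.symm, Module.Free.of_equiv e.symm⟩
  | succ n ih =>
    obtain ⟨G, _, _, f, _, _, hf, hKA⟩ := hA.exists_surjective
    obtain ⟨H, _, _, g, _, _, hg, hKC⟩ := hC.exists_surjective
    obtain ⟨s, hs⟩ := Module.projective_lifting_property p g hp
    have hs' (y : H) : p (s y) = g y := congr($hs y)
    have hpi (x : A) : p (i x) = 0 := hip.apply_apply_eq_zero x
    let F : G × H →ₗ[R] B := (i ∘ₗ f).coprod s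
    have hF : Function.Surjective F := by
      intro b
      obtain ⟨y, hy⟩ := hg (p b)
      obtain ⟨a, ha⟩ := (hip (b - s y)).mp (by rw [map_sub, hs', hy, sub_self])
      obtain ⟨x, hx⟩ := hf a
      exact ⟨(x, y), by simp [F, hx, ha]⟩
    refine of_ker F hF ?_
    let j : LinearMap.ker f →ₗ[R] LinearMap.ker F :=
      (LinearMap.inl R G H ∘ₗ (LinearMap.ker f).subtype).codRestrict _ fun x ↦ by
        simp [F]
    let q : LinearMap.ker F →ₗ[R] LinearMap.ker g :=
      (LinearMap.snd R G H ∘ₗ (LinearMap.ker F).subtype).codRestrict _ fun x ↦ by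
        have hx : i (f x.1.1) + s x.1.2 = 0 := x.2
        simpa [hs', hpi] using congr(p $hx)
    refine ih (i := j) (p := q) ?_ ?_ ?_ hKA hKC
    · intro x y hxy
      exact Subtype.ext congr(($hxy).1.1)
    · rintro ⟨⟨x, y⟩, hxy⟩
      constructor
      · intro h
        have hy : y = 0 := congr(($h).1)
        subst hy
        have hx : i (f x) + s 0 = 0 := hxy
        rw [map_zero, add_zero] at hx
        exact ⟨⟨x, hi (hx.trans (map_zero i).symm)⟩, rfl⟩
      · rintro ⟨x', hx'⟩
        rw [← hx']
        rfl
    · rintro ⟨y, hy⟩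
      obtain ⟨a, ha⟩ := (hip (s y)).mp (by rw [hs']; exact hy)
      obtain ⟨x, hx⟩ := hf (-a)
      refine ⟨⟨(x, y), ?_⟩, rfl⟩
      change i (f x) + s y = 0
      rw [hx, map_neg, ha, neg_add_cancel]

theorem of_exact_quotient {i : A →ₗ[R] B} {p : B →ₗ[R] C} (hi : Function.Injective i)
    (hip : Function.Exact i p) (hp : Function.Surjective p) (hA : HasFreeResolution R n A)
    (hB : HasFreeResolution R n B) : HasFreeResolution R (n + 1) C := by
  obtain ⟨G, _, _, f, _, _, hf, hS⟩ := hB.succ.exists_surjective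
  refine of_ker (p ∘ₗ f) (hp.comp hf) ?_
  have hA' : HasFreeResolution R n (LinearMap.ker p) := by
    rw [hip.linearMap_ker_eq]
    exact hA.of_equiv (LinearEquiv.ofInjective i hi)
  refine of_exact (i := Submodule.inclusion (LinearMap.ker_le_ker_comp f p))
    (p := (f ∘ₗ (LinearMap.ker (p ∘ₗ f)).subtype).codRestrict (LinearMap.ker p) fun x ↦ x.2)
    (Submodule.inclusion_injective _) ?_ ?_ hS hA'
  · rintro ⟨x, hx⟩
    constructor
    · intro h
      exact ⟨⟨x, congr(($h).1)⟩, rfl⟩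
    · rintro ⟨y, hy⟩
      rw [← hy]
      exact Subtype.ext y.2
  · rintro ⟨b, hb⟩
    obtain ⟨x, rfl⟩ := hf b
    exact ⟨⟨x, hb⟩, rfl⟩

open TensorProduct in
theorem baseChange (S : Type u) [CommRing S] [Algebra R S] [Module.Flat R S]
    (h : HasFreeResolution R n M) : HasFreeResolution S n (S ⊗[R] M) := by
  induction n generalizing M with
  | zero =>
    obtain ⟨_, _⟩ := h
    exact ⟨inferInstance, inferInstance⟩
  | succ n ih =>
    obtain ⟨K, G, _, _, _, _, i, f, _, _, hi, hif, hf, hK⟩ := h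
    exact ⟨S ⊗[R] K, S ⊗[R] G, _, _, _, _, i.baseChange S, f.baseChange S, inferInstance,
      inferInstance, Module.Flat.lTensor_preserves_injective_linearMap i hi,
      lTensor_exact S hif hf, LinearMap.lTensor_surjective S hf, ih hK⟩

/-- A projective module with a finite free resolution is stably free. -/
theorem exists_free_prod [Module.Finite R M] [Module.Projective R M]
    (h : HasFreeResolution R n M) : ∃ (F : Type u) (_ : AddCommGroup F) (_ : Module R F),
      Module.Finite R F ∧ Module.Free R F ∧ Module.Free R (M × F) := by
  induction n generalizing M with
  | zero =>
    obtain ⟨_, _⟩ := h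
    exact ⟨PUnit, _, _, inferInstance, inferInstance, inferInstance⟩
  | succ n ih =>
    obtain ⟨K, G, _, _, _, _, i, f, _, _, hi, hif, hf, hK⟩ := h
    obtain ⟨e⟩ := hif.nonempty_equiv_prod hi hf
    have : Module.Finite R K := Module.Finite.of_surjective
      (LinearMap.fst R K M ∘ₗ e.toLinearMap) (Prod.fst_surjective.comp e.surjective)
    have : Module.Projective R (K × M) := Module.Projective.of_equiv e
    have : Module.Projective R K :=
      Module.Projective.of_split (LinearMap.inl R K M) (LinearMap.fst R K M) (by ext; simp)
    obtain ⟨F, _, _, _, _, _⟩ := ih hK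
    refine ⟨K × F, _, _, inferInstance, inferInstance, ?_⟩
    have e' : (G × F) ≃ₗ[R] M × K × F :=
      ((e.trans (LinearEquiv.prodComm R K M)).prodCongr (LinearEquiv.refl R F)).trans
        (LinearEquiv.prodAssoc R M K F)
    exact Module.Free.of_equiv e'

end HasFreeResolution

namespace HasFreeResolution
open TensorProduct

variable {R S : Type u} [CommRing R] [CommRing S] [Algebra R S] {M : Type u} [AddCommGroup M]
  [Module R M] [Module S M] [IsScalarTower R S M]

/-- If `S` is a polynomial ring over `R`, an `S`-module with a free resolution over `R` has one
over `S`. -/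
theorem of_basis_pow (b : Module.Basis ℕ R S) (t : S) (hb : ∀ i, b i = t ^ i) {n : ℕ}
    (h : HasFreeResolution R n M) : HasFreeResolution S (n + 1) M := by
  have : Module.Free R S := Module.Free.of_basis b
  let τ : M →ₗ[R] M := (LinearMap.lsmul S M t).restrictScalars R
  let χ : S ⊗[R] M →ₗ[S] S ⊗[R] M := t • LinearMap.id - τ.baseChange S
  let μ : S ⊗[R] M →ₗ[S] M := (LinearMap.id : M →ₗ[R] M).liftBaseChange S
  have hχ (s : S) (x : M) : χ (s ⊗ₜ x) = (t * s) ⊗ₜ x - s ⊗ₜ (t • x) := by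
    simp [χ, τ, TensorProduct.smul_tmul']
  have hμ (s : S) (x : M) : μ (s ⊗ₜ x) = s • x := by simp [μ]
  have hrepr (s : S) (i : ℕ) : b.repr (t * s) (i + 1) = b.repr s i := by
    suffices h : b.coord (i + 1) ∘ₗ LinearMap.mulLeft R t = b.coord i from congr($h s)
    refine b.ext fun j ↦ ?_
    have : t * b j = b (j + 1) := by rw [hb, hb, pow_succ']
    simp [this, Finsupp.single_apply]
  have hcoeff (x : S ⊗[R] M) (i : ℕ) : equivFinsuppOfBasisLeft b (χ x) (i + 1) =
      equivFinsuppOfBasisLeft b x i - t • equivFinsuppOfBasisLeft b x (i + 1) := by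
    induction x with
    | zero => simp
    | tmul s x =>
      rw [hχ, map_sub, Finsupp.sub_apply]
      simp only [equivFinsuppOfBasisLeft_apply_tmul_apply, hrepr, smul_comm t]
    | add x y hx hy =>
      simp only [map_add, Finsupp.add_apply, hx, hy, smul_add]
      abel
  have hinj : Function.Injective χ := by
    rw [injective_iff_map_eq_zero]
    intro x hx
    have hstep (i : ℕ) :
        equivFinsuppOfBasisLeft b x i = t • equivFinsuppOfBasisLeft b x (i + 1) := by
      have := hcoeff x i
      rw [hx, map_zero, Finsupp.zero_apply] at this
      exact (sub_eq_zero.mp this.symm)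
    have hpow (i j : ℕ) :
        equivFinsuppOfBasisLeft b x i = t ^ j • equivFinsuppOfBasisLeft b x (i + j) := by
      induction j with
      | zero => simp
      | succ j ih => rw [ih, hstep (i + j), smul_smul, ← pow_succ, add_assoc]
    rw [← (equivFinsuppOfBasisLeft b).map_eq_zero_iff]
    ext i
    obtain ⟨d, hd⟩ := (equivFinsuppOfBasisLeft b x).support.exists_nat_subset_range
    rw [hpow i d, Finsupp.notMem_support_iff.mp fun hmem ↦ ?_, smul_zero, Finsupp.zero_apply]
    have := Finset.mem_range.mp (hd hmem)
    lia
  have hrange (x : S ⊗[R] M) : x - 1 ⊗ₜ μ x ∈ LinearMap.range χ := by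
    induction x with
    | zero => simp
    | tmul s x =>
      have hs : s ∈ Submodule.span R (Set.range b) := by rw [b.span_eq]; trivial
      induction hs using Submodule.span_induction generalizing x with
      | mem s hs =>
        obtain ⟨i, rfl⟩ := hs
        rw [hb]
        induction i generalizing x with
        | zero => simp [hμ]
        | succ i ih =>
          have : (t ^ (i + 1)) ⊗ₜ[R] x - 1 ⊗ₜ μ ((t ^ (i + 1)) ⊗ₜ x) =
              χ ((t ^ i) ⊗ₜ x) + ((t ^ i) ⊗ₜ (t • x) - 1 ⊗ₜ μ ((t ^ i) ⊗ₜ (t • x))) := by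
            rw [hχ, hμ, hμ, smul_smul, ← pow_succ, ← pow_succ']
            abel
          rw [this]
          exact add_mem (LinearMap.mem_range_self χ _) (ih _)
      | zero => simp
      | add s s' _ _ h h' =>
        have : (s + s') ⊗ₜ[R] x - 1 ⊗ₜ μ ((s + s') ⊗ₜ x) =
            (s ⊗ₜ x - 1 ⊗ₜ μ (s ⊗ₜ x)) + (s' ⊗ₜ x - 1 ⊗ₜ μ (s' ⊗ₜ x)) := by
          rw [add_tmul, map_add, tmul_add]
          abel
        rw [this]
        exact add_mem (h x) (h' x)
      | smul r s _ h =>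
        have : (r • s) ⊗ₜ[R] x - 1 ⊗ₜ μ ((r • s) ⊗ₜ x) =
            s ⊗ₜ (r • x) - 1 ⊗ₜ μ (s ⊗ₜ (r • x)) := by
          rw [smul_tmul]
        rw [this]
        exact h (r • x)
    | add x y hx hy =>
      have : x + y - 1 ⊗ₜ μ (x + y) = (x - 1 ⊗ₜ μ x) + (y - 1 ⊗ₜ μ y) := by
        rw [map_add, tmul_add]
        abel
      rw [this]
      exact add_mem hx hy
  refine of_exact_quotient (i := χ) (p := μ) hinj ?_ ?_ (h.baseChange S) (h.baseChange S)
  · intro x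
    constructor
    · intro hx
      simpa [hx] using hrange x
    · rintro ⟨y, rfl⟩
      induction y with
      | zero => simp
      | tmul s x => rw [hχ, map_sub, hμ, hμ, mul_comm, mul_smul, sub_self]
      | add x y hx hy => rw [map_add, map_add, hx, hy, add_zero]
  · exact fun x ↦ ⟨1 ⊗ₜ x, by simp [hμ]⟩

theorem exists_of_quotient_prime [IsNoetherianRing S]
    (h : ∀ p : Ideal S, p.IsPrime → p ≠ ⊥ → ∃ n, HasFreeResolution S n (S ⧸ p))
    (M : Type u) [AddCommGroup M] [Module S M] (hM : Module.Finite S M) :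
    ∃ n, HasFreeResolution S n M := by
  induction hM using IsNoetherianRing.induction_on_isQuotientEquivQuotientPrime S with
  | subsingleton N => exact ⟨0, of_subsingleton⟩
  | quotient N p e =>
    by_cases hp : p.1 = ⊥
    · have e' : (S ⧸ p.1) ≃ₗ[S] S := Submodule.quotEquivOfEqBot p.1 hp
      exact ⟨0, of_equiv (e.trans e').symm ⟨inferInstance, inferInstance⟩⟩
    · obtain ⟨n, hn⟩ := h p.1 p.2 hp
      exact ⟨n, hn.of_equiv e.symm⟩
  | exact A B C f g hf hg hfg hA hC =>
    obtain ⟨a, ha⟩ := hA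
    obtain ⟨c, hc⟩ := hC
    exact ⟨max a c, of_exact hf hfg hg (ha.mono (le_max_left _ _)) (hc.mono (le_max_right _ _))⟩

end HasFreeResolution

/-- Hilbert's syzygy theorem: finite modules over a polynomial ring over a field have finite free
resolutions. -/
theorem MvPolynomial.exists_hasFreeResolution (k : Type u) [Field k] (m : ℕ) (M : Type u)
    [AddCommGroup M] [Module (MvPolynomial (Fin m) k) M]
    [Module.Finite (MvPolynomial (Fin m) k) M] :
    ∃ n, HasFreeResolution (MvPolynomial (Fin m) k) n M := by
  induction m generalizing M with
  | zero =>
    refine HasFreeResolution.exists_of_quotient_prime (fun p hp hp0 ↦ ?_) M inferInstance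
    obtain ⟨f, hf, hf0⟩ := Submodule.exists_mem_ne_zero_of_ne_bot hp0
    refine absurd (p.eq_top_of_isUnit_mem hf ?_) hp.ne_top
    rw [← MulEquiv.isUnit_map (MvPolynomial.isEmptyRingEquiv k (Fin 0)), isUnit_iff_ne_zero]
    exact (map_ne_zero_iff _ (MvPolynomial.isEmptyRingEquiv k (Fin 0)).injective).mpr hf0
  | succ m ih =>
    refine HasFreeResolution.exists_of_quotient_prime (fun p hp hp0 ↦ ?_) M inferInstance
    obtain ⟨f, hf, hf0⟩ := Submodule.exists_mem_ne_zero_of_ne_bot hp0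
    obtain ⟨N, a, ha, hmonic⟩ := exists_shearFinSuccEquiv_leadingCoeff hf0
    set e := shearFinSuccEquiv k m N
    set g := Polynomial.C (MvPolynomial.C a) * e f with hg
    let _ : Algebra (MvPolynomial (Fin m) k) (MvPolynomial (Fin (m + 1)) k) :=
      (e.symm.toRingHom.comp Polynomial.C).toAlgebra
    let e' : Polynomial (MvPolynomial (Fin m) k) ≃ₐ[MvPolynomial (Fin m) k]
        MvPolynomial (Fin (m + 1)) k := AlgEquiv.ofRingEquiv (f := e.symm) fun _ ↦ rfl
    let b := (Polynomial.basisMonomials (MvPolynomial (Fin m) k)).map e'.toLinearEquiv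
    have hgp : e' g ∈ p := by
      have : e' g = e.symm (Polynomial.C (MvPolynomial.C a)) * f := by
        change e.symm g = _
        rw [hg, map_mul, RingEquiv.symm_apply_apply]
      rw [this]
      exact p.mul_mem_left _ hf
    have : Module.Finite (MvPolynomial (Fin m) k)
        (Polynomial (MvPolynomial (Fin m) k) ⧸ Ideal.span {g}) := hmonic.finite_quotient
    let q : Polynomial (MvPolynomial (Fin m) k) →ₐ[MvPolynomial (Fin m) k]
        MvPolynomial (Fin (m + 1)) k ⧸ p := (Ideal.Quotient.mkₐ _ p).comp e'.toAlgHom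
    have hq : ∀ x ∈ Ideal.span {g}, q x = 0 := by
      intro x hx
      obtain ⟨y, rfl⟩ := Ideal.mem_span_singleton'.mp hx
      rw [map_mul]
      have : q g = 0 := Ideal.Quotient.eq_zero_iff_mem.mpr hgp
      rw [this, mul_zero]
    have : Module.Finite (MvPolynomial (Fin m) k) (MvPolynomial (Fin (m + 1)) k ⧸ p) :=
      Module.Finite.of_surjective (Ideal.Quotient.liftₐ _ q hq).toLinearMap <| by
        refine Ideal.Quotient.lift_surjective_of_surjective _ hq ?_
        exact Ideal.Quotient.mk_surjective.comp e'.surjective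
    obtain ⟨n, hn⟩ := ih (MvPolynomial (Fin (m + 1)) k ⧸ p)
    exact ⟨n + 1, hn.of_basis_pow b (e' Polynomial.X) fun i ↦ by
      simp [b, ← Polynomial.X_pow_eq_monomial]⟩

section
open Matrix

variable {L : Type u} [Field L] {m : ℕ} (P : Type u) [AddCommGroup P]
  [Module (MvPolynomial (Fin m) L) P]

theorem MvPolynomial.free_of_free_prod_self
    [Module.Finite (MvPolynomial (Fin m) L) P]
    [Module.Free (MvPolynomial (Fin m) L) (P × MvPolynomial (Fin m) L)] :
    Module.Free (MvPolynomial (Fin m) L) P := by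
  classical
  set R := MvPolynomial (Fin m) L with hR
  let ι := Module.Free.ChooseBasisIndex R (P × R)
  let e : (P × R) ≃ₗ[R] (ι → R) := (Module.Free.chooseBasis R (P × R)).equivFun
  have hv : ∃ w, w ⬝ᵥ e (0, 1) = 1 := by
    refine ⟨fun i ↦ (e.symm fun j ↦ if i = j then 1 else 0).2, ?_⟩
    have h : (LinearMap.snd R P R ∘ₗ e.symm.toLinearMap) (e (0, 1)) = 1 := by simp
    rw [LinearMap.pi_apply_eq_sum_univ] at h
    simpa [dotProduct, mul_comm] using h
  obtain ⟨i₀⟩ : Nonempty ι := by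
    by_contra hι
    rw [not_nonempty_iff] at hι
    obtain ⟨w, hw⟩ := hv
    simp at hw
  obtain ⟨u, hu, U, hU⟩ := exists_rowEquiv_single (φ := RingHom.id L) Function.surjective_id m
    (e (0, 1)) hv i₀
  have hU' : e (0, 1) ᵥ* (U : Matrix ι ι R) = Pi.single i₀ u := by
    rw [← hU]
    congr 1
    ext1 i j
    exact (MvPolynomial.map_id _).symm
  let h : (P × R) ≃ₗ[R] (ι → R) := e.trans
    (Matrix.toLinearEquivRight'OfInv (M := (↑U⁻¹ : Matrix ι ι R)) (M' := (U : Matrix ι ι R))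
      (by simp) (by simp))
  have hh : h (0, 1) = Pi.single i₀ u := hU'
  have hr (r : R) : h (0, r) = Pi.single i₀ (r * u) := by
    have : ((0 : P), r) = r • ((0 : P), (1 : R)) := by simp
    rw [this, map_smul, hh, ← Pi.single_smul, smul_eq_mul]
  let g : P →ₗ[R] ({i // i ≠ i₀} → R) :=
    LinearMap.funLeft R R Subtype.val ∘ₗ h.toLinearMap ∘ₗ LinearMap.inl R P R
  have hg (x : P) (i : {i // i ≠ i₀}) : g x i = h (x, 0) i := rfl
  obtain ⟨s, hs⟩ := hu.exists_left_inv
  have hbij : Function.Bijective g := by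
    constructor
    · rw [injective_iff_map_eq_zero]
      intro x hx
      have : h (x, 0) = h (0, h (x, 0) i₀ * s) := by
        rw [hr]
        ext1 i
        by_cases hi : i = i₀
        · subst hi
          rw [Pi.single_eq_same, mul_assoc, hs, mul_one]
        · rw [Pi.single_eq_of_ne hi]
          exact congr($hx ⟨i, hi⟩)
      exact congr(($(h.injective this)).1)
    · intro y
      set z := h.symm fun i ↦ if hi : i ≠ i₀ then y ⟨i, hi⟩ else 0 with hz
      refine ⟨z.1, ?_⟩
      ext1 i
      have h₁ : (z.1, (0 : R)) = z - (0, z.2) := by ext <;> simp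
      rw [hg, h₁, map_sub, hr, Pi.sub_apply, Pi.single_eq_of_ne i.2, sub_zero, hz,
        LinearEquiv.apply_symm_apply, dif_pos i.2]
  exact Module.Free.of_equiv (LinearEquiv.ofBijective g hbij).symm

/-- The Quillen–Suslin theorem. -/
theorem MvPolynomial.free_of_projective [Module.Finite (MvPolynomial (Fin m) L) P]
    [Module.Projective (MvPolynomial (Fin m) L) P] : Module.Free (MvPolynomial (Fin m) L) P := by
  set R := MvPolynomial (Fin m) L with hR
  obtain ⟨n, hn⟩ := MvPolynomial.exists_hasFreeResolution L m P
  obtain ⟨F, _, _, _, _, hfree⟩ := hn.exists_free_prod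
  have key (a : ℕ) (h : Module.Free R (P × (Fin a → R))) : Module.Free R P := by
    induction a with
    | zero => exact Module.Free.of_equiv (LinearEquiv.prodUnique (R := R) (M := P) (M₂ := Fin 0 → R))
    | succ a ih =>
      have : Module.Free R ((P × (Fin a → R)) × R) := Module.Free.of_equiv <|
        (((LinearEquiv.refl R P).prodCongr (Fin.consLinearEquiv R fun _ ↦ R)).symm.trans <|
          (LinearEquiv.refl R P).prodCongr (LinearEquiv.prodComm R R (Fin a → R))).trans
          (LinearEquiv.prodAssoc R P (Fin a → R) R).symm
      exact ih (MvPolynomial.free_of_free_prod_self _)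
  exact key _ (Module.Free.of_equiv
    ((LinearEquiv.refl R P).prodCongr (Module.finBasis R F).equivFun))

end

section
open Matrix nonZeroDivisors

theorem Matrix.rank_map_algebraMap_fractionRing {R K : Type*} [CommRing R] [IsDomain R] [Field K]
    [Algebra R K] [IsFractionRing R K] {m n : Type*} [Finite m] [Fintype n] (M : Matrix m n R) :
    (M.map (algebraMap R K)).rank = M.rank := by
  let f : (m → R) →ₗ[R] (m → K) := .pi fun i ↦ Algebra.linearMap R K ∘ₗ .proj i
  rw [rank_eq_finrank_span_cols, rank_eq_finrank_span_cols]
  rw [← IsLocalizedModule.finrank_eq R⁰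
    ((Submodule.span R (Set.range M.col)).toLocalized' K R⁰ f) le_rfl,
    ← IsLocalization.finrank_eq K R⁰ le_rfl, Submodule.localized'_span, ← Set.range_comp]
  rfl

theorem Function.Injective.exists_strictMono_comp_perm {r : ℕ} {α : Type*} [LinearOrder α]
    {f : Fin r → α} (hf : Function.Injective f) :
    ∃ σ : Equiv.Perm (Fin r), StrictMono (f ∘ σ) :=
  ⟨Tuple.sort f, (Tuple.monotone_sort f).strictMono_of_injective
    (hf.comp (Tuple.sort f).injective)⟩

theorem Matrix.exists_strictMono_linearIndependent_row {K : Type*} [Field K] {l r : ℕ}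
    {n : Type*} [Fintype n]
    (M : Matrix (Fin l) n K) (hr : M.rank = r) :
    ∃ f : Fin r → Fin l, StrictMono f ∧ LinearIndependent K fun k ↦ M (f k) := by
  subst hr
  rw [rank_eq_finrank_span_row]
  obtain ⟨v, hv, -, hli⟩ := Submodule.exists_fun_fin_finrank_span_eq K (Set.range M.row)
  choose f hf using hv
  have hinj : Function.Injective f := fun a b h ↦ hli.injective (by rw [← hf, ← hf, h])
  obtain ⟨σ, hσ⟩ := hinj.exists_strictMono_comp_perm
  refine ⟨f ∘ σ, hσ, ?_⟩
  have : (fun k ↦ M ((f ∘ σ) k)) = v ∘ σ := funext fun k ↦ hf (σ k)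
  rw [this]
  exact hli.comp σ σ.injective

theorem Matrix.exists_strictMono_det_submatrix_ne_zero {R : Type*} [CommRing R] [IsDomain R]
    {l c r : ℕ} (M : Matrix (Fin l) (Fin c) R) (hr : M.rank = r) :
    ∃ (f : Fin r → Fin l) (g : Fin r → Fin c), StrictMono f ∧ StrictMono g ∧
      (M.submatrix f g).det ≠ 0 := by
  let K := FractionRing R
  let N := M.map (algebraMap R K)
  obtain ⟨f, hf, hfi⟩ := N.exists_strictMono_linearIndependent_row
    ((M.rank_map_algebraMap_fractionRing).trans hr)
  have h2 : ((N.submatrix f id)ᵀ).rank = r := by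
    rw [rank_transpose, LinearIndependent.rank_matrix (M := N.submatrix f id) hfi, Fintype.card_fin]
  obtain ⟨g, hg, hgi⟩ := Matrix.exists_strictMono_linearIndependent_row _ h2
  refine ⟨f, g, hf, hg, fun h0 ↦ ?_⟩
  have h3 : IsUnit ((N.submatrix f g)ᵀ) := Matrix.linearIndependent_rows_iff_isUnit.1 hgi
  rw [isUnit_iff_isUnit_det, det_transpose] at h3
  have h4 : (N.submatrix f g).det = algebraMap R K (M.submatrix f g).det := by
    rw [RingHom.map_det]; rfl
  rw [h4, h0, map_zero] at h3
  simp at h3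

theorem dvd_det_submatrix_of_forall_strictMono {R : Type*} [CommRing R]
    {l c r : ℕ} {M : Matrix (Fin l) (Fin c) R} {d : R} (hd : ∀ a ∈ minorsSet r M, d ∣ a)
    (f : Fin r → Fin l) {g : Fin r → Fin c} (hg : StrictMono g) : d ∣ (M.submatrix f g).det := by
  by_cases hf : Function.Injective f
  · obtain ⟨σ, hσ⟩ := hf.exists_strictMono_comp_perm
    have h := hd _ ⟨f ∘ σ, g, hσ, hg, rfl⟩
    have h2 : M.submatrix (f ∘ σ) g = (M.submatrix f g).submatrix σ id := rfl
    rw [h2, det_permute] at h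
    rcases Int.units_eq_one_or (Equiv.Perm.sign σ) with hs | hs <;> simpa [hs] using h
  · simp only [Function.Injective, not_forall] at hf
    obtain ⟨a, b, hab, hne⟩ := hf
    rw [Matrix.det_zero_of_row_eq hne (by ext j; simp [hab])]
    exact dvd_zero d

theorem Matrix.updateRow_submatrix_eq {R : Type*} {l c r : ℕ} (M : Matrix (Fin l) (Fin c) R)
    (f : Fin r → Fin l) (g : Fin r → Fin c) (k : Fin r) (i : Fin l) :
    (M.submatrix f g).updateRow k (M i ∘ g) = M.submatrix (Function.update f k i) g := by
  ext a b
  by_cases h : a = k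
  · subst h; simp
  · simp [h]

/-- **Cramer's rule** for rows of a matrix whose rank is the size of a nonvanishing minor. -/
theorem Matrix.det_smul_row_eq_sum {R : Type*} [CommRing R] [IsDomain R]
    {l c r : ℕ} {M : Matrix (Fin l) (Fin c) R} (hr : M.rank = r)
    {f : Fin r → Fin l} {g : Fin r → Fin c} (hfg : (M.submatrix f g).det ≠ 0) (i : Fin l) :
    (M.submatrix f g).det • M i =
      ∑ k, (M.submatrix (Function.update f k i) g).det • M (f k) := by
  let K := FractionRing R
  let N := M.map (algebraMap R K)
  have hdet : ∀ f' : Fin r → Fin l,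
      (N.submatrix f' g).det = algebraMap R K (M.submatrix f' g).det := fun f' ↦ by
    rw [RingHom.map_det]; rfl
  have hunit : (N.submatrix f g).det ≠ 0 := by
    rw [hdet]; simpa using hfg
  have hli : LinearIndependent K fun k ↦ N (f k) := by
    have h1 : LinearIndependent K (N.submatrix f g).row :=
      Matrix.linearIndependent_rows_of_det_ne_zero hunit
    refine LinearIndependent.of_comp (LinearMap.funLeft K K g) h1
  have hspan : Submodule.span K (Set.range fun k ↦ N (f k)) =
      Submodule.span K (Set.range N.row) := by
    apply Submodule.eq_of_le_of_finrank_eq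
    · apply Submodule.span_mono
      rintro _ ⟨k, rfl⟩
      exact ⟨f k, rfl⟩
    · rw [finrank_span_eq_card hli, ← rank_eq_finrank_span_row, Fintype.card_fin,
        M.rank_map_algebraMap_fractionRing, hr]
  have hmem : N i ∈ Submodule.span K (Set.range fun k ↦ N (f k)) :=
    hspan ▸ Submodule.subset_span ⟨i, rfl⟩
  obtain ⟨a, ha⟩ := (Submodule.mem_span_range_iff_exists_fun K).1 hmem
  have hc : ∀ k, (N.submatrix (Function.update f k i) g).det = a k * (N.submatrix f g).det := by
    intro k
    rw [← updateRow_submatrix_eq, ← ha]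
    have : (∑ k, a k • N (f k)) ∘ g = ∑ k, a k • (N.submatrix f g) k := by
      ext j
      simp [Finset.sum_apply]
    rw [this, det_updateRow_sum, smul_eq_mul]
  ext j
  apply IsFractionRing.injective R K
  have h5 : N i j = ∑ k, a k * N (f k) j := by
    rw [← ha]; simp [Finset.sum_apply]
  simp only [Pi.smul_apply, Finset.sum_apply, smul_eq_mul, map_mul, map_sum, ← hdet, hc]
  change _ * N i j = ∑ k, _ * N (f k) j
  rw [h5, Finset.mul_sum]
  exact Finset.sum_congr rfl fun k _ ↦ by ring

/-- The scalars `b` for which some matrix annihilates `M` from the left and acts as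
multiplication by `b` on the left kernel of `M`. -/
def Matrix.leftKernelMultipliers {R m n : Type*} [CommRing R] [Fintype m]
    (M : Matrix m n R) : Ideal R where
  carrier := {b | ∃ E : Matrix m m R, E * M = 0 ∧ ∀ v : m → R, v ᵥ* M = 0 → v ᵥ* E = b • v}
  zero_mem' := ⟨0, by simp, by simp⟩
  add_mem' := by
    rintro a b ⟨E, hE, hE'⟩ ⟨E₂, hE₂, hE₂'⟩
    exact ⟨E + E₂, by rw [Matrix.add_mul, hE, hE₂, add_zero], fun v hv ↦ by
      rw [Matrix.vecMul_add, hE' v hv, hE₂' v hv, add_smul]⟩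
  smul_mem' := by
    rintro c b ⟨E, hE, hE'⟩
    exact ⟨c • E, by rw [Matrix.smul_mul, hE, smul_zero], fun v hv ↦ by
      rw [Matrix.vecMul_smul, hE' v hv, smul_smul, smul_eq_mul]⟩

theorem Matrix.mem_leftKernelMultipliers_of_mul_mem_minorsSet {R : Type*} [CommRing R] [IsDomain R]
    {l c r : ℕ} {M : Matrix (Fin l) (Fin c) R} (hr : M.rank = r) {d : R} (hd0 : d ≠ 0)
    (hd : ∀ a ∈ minorsSet r M, d ∣ a) {b : R} (hb : d * b ∈ minorsSet r M) :
    b ∈ M.leftKernelMultipliers := by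
  rcases eq_or_ne b 0 with rfl | hb0
  · exact zero_mem _
  obtain ⟨f, g, -, hg, hfg⟩ := hb
  have hne : (M.submatrix f g).det ≠ 0 := hfg ▸ mul_ne_zero hd0 hb0
  choose β hβ using fun (k : Fin r) (i : Fin l) ↦
    dvd_det_submatrix_of_forall_strictMono hd (Function.update f k i) hg
  have hE : ∀ v : Fin l → R, v ᵥ* (Matrix.of fun i ↦
      b • (Pi.single i 1 : Fin l → R) - ∑ k, β k i • (Pi.single (f k) 1 : Fin l → R)) =
      b • v - ∑ k, (∑ i, v i * β k i) • (Pi.single (f k) 1 : Fin l → R) := by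
    intro v
    ext j
    simp only [vecMul, dotProduct, of_apply, Pi.sub_apply, Pi.smul_apply, Finset.sum_apply,
      smul_eq_mul, mul_sub, Finset.sum_sub_distrib, Finset.mul_sum, Finset.sum_mul]
    congr 1
    · simp [Pi.single_apply, mul_comm]
    · rw [Finset.sum_comm]
      exact Finset.sum_congr rfl fun _ _ ↦ Finset.sum_congr rfl fun _ _ ↦ by ring
  refine ⟨_, ?_, fun v hv ↦ (hE v).trans ?_⟩
  · ext1 i
    have hi := det_smul_row_eq_sum hr hne i
    rw [← hfg] at hi
    simp only [hβ, mul_smul, ← Finset.smul_sum] at hi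
    have hi := smul_right_injective _ hd0 hi
    intro j
    have hj := congr_fun hi j
    simp only [Pi.smul_apply, Finset.sum_apply, smul_eq_mul] at hj
    simp [Matrix.mul_apply, sub_mul, Finset.sum_mul, Finset.sum_sub_distrib, Pi.single_apply, hj]
    rw [Finset.sum_comm]
    simp
  · have hz : ∀ k, ∑ i, v i * β k i = 0 := by
      intro k
      apply (mul_eq_zero.1 (_ : d * _ = 0)).resolve_left hd0
      have h0 : (∑ i, v i • (M i ∘ g)) = 0 := by
        ext j
        simpa [vecMul, dotProduct] using congr_fun hv (g j)
      have h1 : ((M.submatrix f g).updateRow k (∑ i, v i • (M i ∘ g))).det = 0 := by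
        rw [h0]
        exact det_eq_zero_of_row_eq_zero k (by simp)
      rw [← h1]
      have h2 : ∀ w : Fin r → R, ((M.submatrix f g).updateRow k w).det =
          (detRowAlternating.toMultilinearMap.toLinearMap (M.submatrix f g) k) w := fun w ↦ rfl
      simp only [h2, map_sum, map_smul]
      simp only [← h2, updateRow_submatrix_eq, hβ, smul_eq_mul, Finset.mul_sum]
      exact Finset.sum_congr rfl fun _ _ ↦ by ring
    simp [hz]

/-- If the reduced minors of order `rank M` generate the unit ideal, then the left kernel of `M`
is the image of an idempotent matrix. -/
theorem Matrix.exists_leftKernel_projector {R : Type*} [CommRing R] [IsDomain R]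
    {l c r : ℕ} {M : Matrix (Fin l) (Fin c) R} (hr : M.rank = r) {d : R}
    (hd : IsGcdOf d (minorsSet r M)) (hspan : Ideal.span {b | d * b ∈ minorsSet r M} = ⊤) :
    ∃ E : Matrix (Fin l) (Fin l) R, E * M = 0 ∧ ∀ v : Fin l → R, v ᵥ* M = 0 → v ᵥ* E = v := by
  have hd0 : d ≠ 0 := by
    rintro rfl
    obtain ⟨f, g, hf, hg, hfg⟩ := M.exists_strictMono_det_submatrix_ne_zero hr
    exact hfg (zero_dvd_iff.1 (hd.1 _ ⟨f, g, hf, hg, rfl⟩))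
  have h1 : (1 : R) ∈ M.leftKernelMultipliers := by
    have : Ideal.span {b | d * b ∈ minorsSet r M} ≤ M.leftKernelMultipliers :=
      Ideal.span_le.2 fun b hb ↦ mem_leftKernelMultipliers_of_mul_mem_minorsSet hr hd0 hd.1 hb
    exact this (hspan ▸ Submodule.mem_top)
  obtain ⟨E, hE, hE'⟩ := h1
  exact ⟨E, hE, fun v hv ↦ by rw [hE' v hv, one_smul]⟩

theorem Matrix.rank_eq_of_vecMul_injective {R : Type*} [CommRing R] [IsDomain R]
    {s : ℕ} {n : Type*} [Fintype n] {M : Matrix (Fin s) n R}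
    (hM : ∀ v : Fin s → R, v ᵥ* M = 0 → v = 0) : M.rank = s := by
  let K := FractionRing R
  rw [← M.rank_map_algebraMap_fractionRing (K := K)]
  have hli : LinearIndependent R M.row := by
    rw [Fintype.linearIndependent_iff]
    intro v hv
    refine congr_fun (hM v ?_)
    rw [← hv]
    ext j
    simp [vecMul, dotProduct]
  let f : (n → R) →ₗ[R] (n → K) := (Algebra.linearMap R K).compLeft n
  have hf : LinearMap.ker f = ⊥ := LinearMap.ker_eq_bot.2 fun a b h ↦ funext fun j ↦
    IsFractionRing.injective R K (congr_fun h j)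
  have h2 : LinearIndependent K (M.map (algebraMap R K)).row :=
    (LinearIndependent.iff_fractionRing R K).1 (hli.map' f hf)
  simpa using h2.rank_matrix

theorem Matrix.exists_unimodular_of_leftKernel_projector {R : Type*} [CommRing R] [Nontrivial R]
    (hfree : ∀ (s : ℕ) (N : Submodule R (Fin s → R)) [Module.Finite R N] [Module.Projective R N],
      Module.Free R N) {s : ℕ} {n : Type*} {M : Matrix (Fin s) n R}
    {E : Matrix (Fin s) (Fin s) R} (hEM : E * M = 0) (hE : ∀ v, v ᵥ* M = 0 → v ᵥ* E = v)
    {v₀ : Fin s → R} (hv₀ : v₀ ᵥ* M = 0) (hne : v₀ ≠ 0) :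
    ∃ v, v ᵥ* M = 0 ∧ ∃ w, w ⬝ᵥ v = 1 := by
  let N : Submodule R (Fin s → R) := LinearMap.ker M.vecMulLinear
  have hmem : ∀ v, v ∈ N ↔ v ᵥ* M = 0 := fun v ↦ Iff.rfl
  let q : (Fin s → R) →ₗ[R] N := E.vecMulLinear.codRestrict N fun v ↦ by
    rw [hmem, vecMulLinear_apply, vecMul_vecMul, hEM, vecMul_zero]
  have hq : ∀ v : N, q v = v := fun v ↦ Subtype.ext (hE v v.2)
  have : Module.Projective R N := Module.Projective.of_split N.subtype q (LinearMap.ext hq)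
  have : Module.Finite R N := Module.Finite.of_surjective q fun v ↦ ⟨v, hq v⟩
  have : Module.Free R N := hfree s N
  let b := Module.Free.chooseBasis R N
  have : Nontrivial N := ⟨⟨⟨v₀, hv₀⟩, 0, fun h ↦ hne congr(($h : Fin s → R))⟩⟩
  obtain ⟨i⟩ : Nonempty (Module.Free.ChooseBasisIndex R N) := b.index_nonempty
  refine ⟨b i, (b i).2, fun j ↦ (b.coord i ∘ₗ q) fun k ↦ if j = k then 1 else 0, ?_⟩
  have h : (b.coord i ∘ₗ q) (b i : Fin s → R) = 1 := by
    rw [LinearMap.comp_apply, hq]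
    simp
  rw [LinearMap.pi_apply_eq_sum_univ] at h
  rw [dotProduct_comm]
  exact h

/-- A matrix over `L[x₁, …, xₘ]` whose left kernel is the image of an idempotent matrix can be
brought into a form with only `rank F` nonzero rows, by an invertible matrix that lifts along a
surjection `R → L`. -/
theorem Matrix.exists_isUnit_det_rows_eq_zero {R : Type*} {L : Type u} [CommRing R] [IsDomain R]
    [Field L] {φ : R →+* L} (hφ : Function.Surjective φ) {m c : ℕ} (s : ℕ)
    (F : Matrix (Fin s) (Fin c) (MvPolynomial (Fin m) L))
    (hF : ∃ E : Matrix (Fin s) (Fin s) (MvPolynomial (Fin m) L),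
      E * F = 0 ∧ ∀ v, v ᵥ* F = 0 → v ᵥ* E = v) :
    ∃ U : Matrix (Fin s) (Fin s) (MvPolynomial (Fin m) R), IsUnit U.det ∧
      ∀ i : Fin s, F.rank ≤ i → ∀ j, (U.map (MvPolynomial.map φ) * F) i j = 0 := by
  induction s with
  | zero => exact ⟨1, by simp, fun i ↦ i.elim0⟩
  | succ s ih =>
    obtain ⟨E, hEF, hE⟩ := hF
    by_cases hker : ∀ v : Fin (s + 1) → MvPolynomial (Fin m) L, v ᵥ* F = 0 → v = 0
    · refine ⟨1, by simp, fun i hi ↦ ?_⟩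
      rw [rank_eq_of_vecMul_injective hker] at hi
      omega
    push Not at hker
    obtain ⟨v₀, hv₀, hne⟩ := hker
    obtain ⟨v, hv, hw⟩ := exists_unimodular_of_leftKernel_projector
      (fun _ N _ _ ↦ MvPolynomial.free_of_projective N) hEF hE hv₀ hne
    obtain ⟨u, hu, U₀, hU₀⟩ := exists_rowEquiv_single hφ m v hw (Fin.last s)
    set V := (U₀ : Matrix (Fin (s + 1)) (Fin (s + 1)) (MvPolynomial (Fin m) R)).map (MvPolynomial.map φ) with hV
    set W := ((U₀⁻¹ : GL (Fin (s + 1)) (MvPolynomial (Fin m) R)) :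
      Matrix (Fin (s + 1)) (Fin (s + 1)) (MvPolynomial (Fin m) R)).map (MvPolynomial.map φ) with hW
    have hVW : V * W = 1 := by
      rw [hV, hW, ← Matrix.map_mul, Units.mul_inv]; simp
    have hWV : W * V = 1 := by
      rw [hV, hW, ← Matrix.map_mul, Units.inv_mul]; simp
    have hlast : ∀ j, (W * F) (Fin.last s) j = 0 := by
      intro j
      have h1 : (Pi.single (Fin.last s) u) ᵥ* (W * F) = 0 := by
        rw [← hU₀, vecMul_vecMul, ← Matrix.mul_assoc, hVW, Matrix.one_mul, hv]
      have h2 := congr_fun h1 j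
      rw [single_vecMul] at h2
      exact (mul_eq_zero.1 h2).resolve_left hu.ne_zero
    have hproj : ∃ E' : Matrix (Fin (s + 1)) (Fin (s + 1)) (MvPolynomial (Fin m) L),
        E' * (W * F) = 0 ∧ ∀ v, v ᵥ* (W * F) = 0 → v ᵥ* E' = v := by
      refine ⟨W * E * V, ?_, fun v hv ↦ ?_⟩
      · calc W * E * V * (W * F) = W * E * (V * W) * F := by simp only [Matrix.mul_assoc]
          _ = 0 := by rw [hVW, Matrix.mul_one, Matrix.mul_assoc, hEF, Matrix.mul_zero]
      · rw [← vecMul_vecMul] at hv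
        rw [← vecMul_vecMul, ← vecMul_vecMul, hE _ hv, vecMul_vecMul, hWV, vecMul_one]
    obtain ⟨E', hE'F, hE'⟩ := hproj
    obtain ⟨U, hU, hUF⟩ := ih ((W * F).submatrix Fin.castSucc id) <| by
      refine ⟨E'.submatrix Fin.castSucc Fin.castSucc, ?_, fun w hw ↦ ?_⟩
      · ext1 i j
        have h := congr_fun (congr_fun hE'F i.castSucc) j
        rw [mul_apply, Fin.sum_univ_castSucc, hlast, mul_zero, add_zero] at h
        rw [mul_apply]
        exact h
      · have h := hE' (Fin.snoc w 0) <| by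
          ext1 j
          have h := congr_fun hw j
          rw [vecMul, dotProduct, Fin.sum_univ_castSucc]
          simpa [vecMul, dotProduct] using h
        ext1 j
        have h := congr_fun h j.castSucc
        rw [vecMul, dotProduct, Fin.sum_univ_castSucc] at h
        simpa [vecMul, dotProduct] using h
    let D : Matrix (Fin (s + 1)) (Fin (s + 1)) (MvPolynomial (Fin m) R) :=
      (fromBlocks U 0 0 (1 : Matrix (Fin 1) (Fin 1) _)).submatrix
        finSumFinEquiv.symm finSumFinEquiv.symm
    refine ⟨D * (U₀⁻¹ : GL (Fin (s + 1)) (MvPolynomial (Fin m) R)), ?_, fun i hi j ↦ ?_⟩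
    · rw [det_mul]
      refine IsUnit.mul ?_ (isUnits_det_units _)
      simpa [D] using hU
    · rw [Matrix.map_mul, Matrix.mul_assoc, mul_apply, Fin.sum_univ_castSucc, ← hW, hlast,
        mul_zero, add_zero]
      refine Fin.lastCases (fun _ ↦ ?_) (fun i hi ↦ ?_) i hi
      · simp [D]
      · have hle : ((W * F).submatrix Fin.castSucc id).rank ≤ F.rank :=
          (rank_submatrix_le _ _ _).trans (rank_mul_le_right _ _)
        have h := hUF i (hle.trans hi) j
        rw [mul_apply] at h
        rw [← h]
        refine Finset.sum_congr rfl fun k _ ↦ ?_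
        simp [D]

end

section
variable {K : Type*} [Field K] (n : ℕ)

/-- The ring homomorphism `K[x₁][x₂, …, x_{n+1}] → K[x₁, …, x_{n+1}]`. -/
noncomputable def flattenHom :
    MvPolynomial (Fin n) (Polynomial K) →+* MvPolynomial (Fin (n + 1)) K :=
  MvPolynomial.eval₂Hom (Polynomial.aeval (MvPolynomial.X 0)).toRingHom
    fun j ↦ MvPolynomial.X j.succ

/-- The ring homomorphism `K[x₁, …, x_{n+1}] → K[x₁][x₂, …, x_{n+1}]`. -/
noncomputable def unflattenHom :
    MvPolynomial (Fin (n + 1)) K →+* MvPolynomial (Fin n) (Polynomial K) :=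
  MvPolynomial.eval₂Hom (MvPolynomial.C.comp Polynomial.C)
    (Fin.cases (MvPolynomial.C Polynomial.X) fun j ↦ MvPolynomial.X j)

theorem flattenHom_C (p : Polynomial K) : flattenHom n (MvPolynomial.C p) = polyImage n p := by
  simp [flattenHom, polyImage]

theorem flattenHom_unflattenHom (a : MvPolynomial (Fin (n + 1)) K) :
    flattenHom n (unflattenHom n a) = a := by
  suffices h : (flattenHom n).comp (unflattenHom n) = RingHom.id _ from congr($h a)
  ext i
  · simp [flattenHom, unflattenHom]
  · refine Fin.cases ?_ (fun j ↦ ?_) i <;> simp [flattenHom, unflattenHom]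

theorem piBar_flattenHom (p : Polynomial K) (a : MvPolynomial (Fin n) (Polynomial K)) :
    piBar n p (flattenHom n a) = MvPolynomial.map (Ideal.Quotient.mk (Ideal.span {p})) a := by
  suffices h : (piBar n p).comp (flattenHom n) =
    MvPolynomial.map (Ideal.Quotient.mk (Ideal.span {p})) from congr($h a)
  apply MvPolynomial.ringHom_ext'
  · apply Polynomial.ringHom_ext'
    · ext1 a
      simp [piBar, flattenHom, MvPolynomial.algebraMap_eq]
      rfl
    · simp [piBar, flattenHom]
  · intro j
    simp [piBar, flattenHom]

theorem polyImage_dvd_of_piBar_eq_zero {p : Polynomial K} {a : MvPolynomial (Fin (n + 1)) K}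
    (ha : piBar n p a = 0) : polyImage n p ∣ a := by
  rw [← flattenHom_unflattenHom n a, piBar_flattenHom] at ha
  have h := (MvPolynomial.C_dvd_iff_map_hom_eq_zero _ p
    (fun r ↦ by rw [Ideal.Quotient.eq_zero_iff_mem, Ideal.mem_span_singleton]) _).2 ha
  rw [← flattenHom_unflattenHom n a, ← flattenHom_C]
  exact map_dvd _ h

end

/-- let `F ∈ A^{l×l}` with `p ∈ K[x₁]` irreducible.  If `rank F̄ = r`
and the `r × r` reduced minors of `F̄` generate the unit ideal of `Ā`
(`J_r(F̄) = Ā`), then there is `U ∈ GL_l(A)` with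
`U·F = diag(1, …, 1, p, …, p)·G` (with `r` ones and `l − r` entries `p`)
for some `G ∈ A^{l×l}`. -/
theorem stmt7 {K : Type*} [Field K] {n l r : ℕ} (p : Polynomial K) (hp : Irreducible p)
    (F : Matrix (Fin l) (Fin l) (MvPolynomial (Fin (n + 1)) K))
    (hrank : (F.map (piBar n p)).rank = r)
    (hJ : ∃ d, IsGcdOf d (minorsSet r (F.map (piBar n p))) ∧
      Ideal.span {b | d * b ∈ minorsSet r (F.map (piBar n p))} = ⊤) :
    ∃ (U G : Matrix (Fin l) (Fin l) (MvPolynomial (Fin (n + 1)) K)),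
      IsUnit U.det ∧
      U * F = Matrix.diagonal (fun i : Fin l =>
        if (i : ℕ) < r then 1 else polyImage n p) * G := by
  have hmax : (Ideal.span {p}).IsMaximal := PrincipalIdealRing.isMaximal_of_irreducible hp
  let : Field (Polynomial K ⧸ Ideal.span {p}) := Ideal.Quotient.field _
  obtain ⟨d, hd, hspan⟩ := hJ
  obtain ⟨U, hU, hUF⟩ := Matrix.exists_isUnit_det_rows_eq_zero
    (Ideal.Quotient.mk_surjective (I := Ideal.span {p})) l (F.map (piBar n p))
    (Matrix.exists_leftKernel_projector hrank hd hspan)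
  have hmap : U.map (MvPolynomial.map (Ideal.Quotient.mk (Ideal.span {p}))) =
      (U.map (flattenHom n)).map (piBar n p) := by
    ext1 i j
    exact (piBar_flattenHom n p (U i j)).symm
  have hdvd : ∀ (i : Fin l) (j : Fin l), (if (i : ℕ) < r then 1 else polyImage n p) ∣
      (U.map (flattenHom n) * F) i j := by
    intro i j
    split_ifs with hi
    · exact one_dvd _
    · apply polyImage_dvd_of_piBar_eq_zero
      have h := hUF i (hrank.le.trans (not_lt.1 hi)) j
      rw [hmap, ← Matrix.map_mul] at h
      exact h
  choose G hG using hdvd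
  refine ⟨U.map (flattenHom n), Matrix.of G, ?_, ?_⟩
  · have h : (U.map (flattenHom n)).det = flattenHom n U.det := by
      rw [RingHom.map_det]; rfl
    rw [h]
    exact hU.map _
  · ext1 i j
    rw [Matrix.diagonal_mul]
    exact hG i j
end
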